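/- Let AW_{m|n}(a) denote the set of all typical antidominant gl(m|n)-weights λ such that λ_i − (−1)^{|i|}a ∉ ℤ for all i ∈ I. If λ ∈ AW_{m|n}(a), then F_a ⊗ M(λ), considered as a gl(m+1|n)-representation via φ_R, is isomorphic to the Verma module M(λ̃). -/

import Mathlib

set_option maxHeartbeats 1000000
set_option synthInstance.maxHeartbeats 400000

noncomputable section
open scoped TensorProduct

/-- The index set `I = {1,…,m,1̄,…,n̄}` of `gl(m|n)`; `Sum.inl` are the even
(unbarred) indices, `Sum.inr` the odd (barred) ones.  The index set
`Î = {0} ∪ I` of `gl(m+1|n)` is realized as `Ind (m+1) n`, with `0 = Sum.inl 0`. -/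
abbrev Ind (m n : ℕ) := Fin m ⊕ Fin n

/-- Parity of an index, as `0` or `1`. -/
def pI {m n : ℕ} : Ind m n → ℕ := Sum.elim (fun _ => 0) (fun _ => 1)

/-- The total order `1 < ⋯ < m < 1̄ < ⋯ < n̄` on `I` (and, with `m+1` in place of `m`,
the order `0 < 1 < ⋯ < m < 1̄ < ⋯ < n̄` on `Î`). -/
def iltI {m n : ℕ} : Ind m n → Ind m n → Prop
  | Sum.inl a, Sum.inl b => a < b
  | Sum.inl _, Sum.inr _ => True
  | Sum.inr _, Sum.inl _ => False
  | Sum.inr a, Sum.inr b => a < b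

/-- The distinguished index `0` of `Î`. -/
def z0 {m n : ℕ} : Ind (m+1) n := Sum.inl 0

/-- The inclusion `I ↪ Î`. -/
def emb {m n : ℕ} : Ind m n → Ind (m+1) n := Sum.map Fin.succ id

lemma emb_injective {m n : ℕ} : Function.Injective (emb (m := m) (n := n)) := by
  intro a b h
  cases a <;> cases b <;> simp [emb, Fin.succ_inj] at h <;> simp [h]

lemma emb_ne_z0 {m n : ℕ} (a : Ind m n) : emb a ≠ z0 := by
  cases a <;> simp [emb, z0, Fin.succ_ne_zero]

/-- Builds a linear map out of a space with basis `α` from a function on basis vectors. -/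
def mkOp {α M : Type} [AddCommGroup M] [Module ℂ M] (g : α → M) : (α →₀ ℂ) →ₗ[ℂ] M :=
  Finsupp.lsum ℂ fun x => LinearMap.toSpanSingleton ℂ M (g x)

/-- Number of odd variables occurring before position `i`. -/
def cntB {n : ℕ} (b : Fin n → Bool) (i : Fin n) : ℕ :=
  (Finset.univ.filter fun j => j < i ∧ b j = true).card

/-- Number of odd variables occurring. -/
def cntA {n : ℕ} (b : Fin n → Bool) : ℕ := (Finset.univ.filter fun j => b j = true).card


/-- The defining (super-)commutation relations of `gl`:
`e_ij e_kl − (−1)^{(|i|+|j|)(|k|+|l|)} e_kl e_ij = δ_jk e_il − (−1)^{(|i|+|j|)(|k|+|l|)} δ_li e_kj`. -/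
inductive glRel (ι : Type) (p : ι → ℕ) [DecidableEq ι] :
    FreeAlgebra ℂ (ι × ι) → FreeAlgebra ℂ (ι × ι) → Prop
  | basic (i j k l : ι) : glRel ι p
      (FreeAlgebra.ι ℂ (i, j) * FreeAlgebra.ι ℂ (k, l)
        - ((-1 : ℂ) ^ ((p i + p j) * (p k + p l))) •
            (FreeAlgebra.ι ℂ (k, l) * FreeAlgebra.ι ℂ (i, j)))
      ((if j = k then FreeAlgebra.ι ℂ (i, l) else 0)
        - ((-1 : ℂ) ^ ((p i + p j) * (p k + p l))) •
            (if l = i then FreeAlgebra.ι ℂ (k, j) else 0))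

/-- The universal enveloping superalgebra of the general linear Lie superalgebra with
index set `ι` and parity `p`, presented by generators `e_ij` and the super-commutator
relations. -/
abbrev UEA (ι : Type) (p : ι → ℕ) [DecidableEq ι] : Type := RingQuot (glRel ι p)

/-- The generator `e_ij` of `UEA ι p`. -/
def gen {ι : Type} (p : ι → ℕ) [DecidableEq ι] (i j : ι) : UEA ι p :=
  RingQuot.mkAlgHom ℂ (glRel ι p) (FreeAlgebra.ι ℂ (i, j))

/-- Monomials of the `D'(m|n)`-module `F_a`: such a monomial
`t_0^{a−k_1−⋯−k_{n̄}} t_1^{k_1}⋯t_m^{k_m} t_{1̄}^{k_{1̄}}⋯t_{n̄}^{k_{n̄}}` is determined by the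
exponents `(k_1,…,k_m,k_{1̄},…,k_{n̄})`. -/
abbrev FaMon (m n : ℕ) := (Fin m → ℕ) × (Fin n → Bool)

/-- The module `F_a`, as the vector space with basis its monomials. -/
abbrev FaSp (m n : ℕ) : Type := FaMon m n →₀ ℂ

/-- A basis monomial of `F_a`. -/
def amono {m n : ℕ} (x : FaMon m n) : FaSp m n := Finsupp.single x 1

/-- The parity of a monomial of `F_a`. -/
def parM {m n : ℕ} (x : FaMon m n) : ℕ := cntA x.2

/-- The monomial `t_0^a` of `F_a`. -/
def hwMon (m n : ℕ) : FaMon m n := (fun _ => 0, fun _ => false)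

/-- Multiplication by `t_i/t_0` on `F_a`, even `i`. -/
def aDivE {m n : ℕ} (i : Fin m) : Module.End ℂ (FaSp m n) :=
  mkOp fun x => amono (Function.update x.1 i (x.1 i + 1), x.2)

/-- Multiplication by `t_ī/t_0` on `F_a`, odd `ī`. -/
def aDivO {m n : ℕ} (i : Fin n) : Module.End ℂ (FaSp m n) :=
  mkOp fun x => if x.2 i then 0 else
    ((-1 : ℂ) ^ (cntB x.2 i)) • amono (x.1, Function.update x.2 i true)

/-- The operator `t_0∂_0` on `F_a` (the exponent of `t_0` is `a` minus the total degree of the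
other variables). -/
def aPar0 {m n : ℕ} (a : ℂ) : Module.End ℂ (FaSp m n) :=
  mkOp fun x => (a - (∑ i, (x.1 i : ℂ)) - (cntA x.2 : ℂ)) • amono x

/-- The operator `t_0∂_i` on `F_a`, even `i`. -/
def aParE {m n : ℕ} (i : Fin m) : Module.End ℂ (FaSp m n) :=
  mkOp fun x => (x.1 i : ℂ) • amono (Function.update x.1 i (x.1 i - 1), x.2)

/-- The operator `t_0∂_ī` on `F_a`, odd `ī`. -/
def aParO {m n : ℕ} (i : Fin n) : Module.End ℂ (FaSp m n) :=
  mkOp fun x => if x.2 i then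
    ((-1 : ℂ) ^ (cntB x.2 i)) • amono (x.1, Function.update x.2 i false) else 0

/-- `t_i/t_0` on `F_a` for `i ∈ I`. -/
def aDiv {m n : ℕ} : Ind m n → Module.End ℂ (FaSp m n) := Sum.elim aDivE aDivO

/-- `t_0∂_i` on `F_a` for `i ∈ Î`. -/
def aParB {m n : ℕ} (a : ℂ) : Ind (m+1) n → Module.End ℂ (FaSp m n) :=
  Sum.elim (Fin.cases (aPar0 a) aParE) aParO

/-- `t_i/t_0` on `F_a` for `i ∈ Î`. -/
def aDivB {m n : ℕ} : Ind (m+1) n → Module.End ℂ (FaSp m n) :=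
  Sum.elim (Fin.cases 1 aDivE) aDivO

/-- The operator `t_i∂_j` on `F_a`, `i, j ∈ Î`. -/
def aTD {m n : ℕ} (a : ℂ) (i j : Ind (m+1) n) : Module.End ℂ (FaSp m n) :=
  aDivB i * aParB a j

/-- The simple highest weight module `L(λ)` over `U(gl(m|n))`: a simple module with a
(nonzero) highest weight vector of weight `λ`. -/
structure SimpleHW (m n : ℕ) (lam : Ind m n → ℂ) where
  L : Type
  [acg : AddCommGroup L]
  [mod : Module ℂ L]
  ρ : UEA (Ind m n) pI →ₐ[ℂ] Module.End ℂ L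
  v : L
  v_ne : v ≠ 0
  hw : ∀ i j : Ind m n, iltI i j → ρ (gen pI i j) v = 0
  hwt : ∀ i : Ind m n, ρ (gen pI i i) v = lam i • v
  simple : ∀ N : Submodule ℂ L, (∀ u x, x ∈ N → ρ u x ∈ N) → N = ⊥ ∨ N = ⊤

attribute [instance] SimpleHW.acg SimpleHW.mod

/-- The Verma module `M(λ)` over `U(gl(m|n))`: a module generated by a highest weight vector
of weight `λ` which is universal among such. -/
structure VermaM (m n : ℕ) (lam : Ind m n → ℂ) where
  L : Type
  [acg : AddCommGroup L]
  [mod : Module ℂ L]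
  ρ : UEA (Ind m n) pI →ₐ[ℂ] Module.End ℂ L
  v : L
  v_ne : v ≠ 0
  hw : ∀ i j : Ind m n, iltI i j → ρ (gen pI i j) v = 0
  hwt : ∀ i : Ind m n, ρ (gen pI i i) v = lam i • v
  gens : ∀ N : Submodule ℂ L, (∀ u x, x ∈ N → ρ u x ∈ N) → v ∈ N → N = ⊤
  univ : ∀ (W : Type) [AddCommGroup W] [Module ℂ W]
      (ρW : UEA (Ind m n) pI →ₐ[ℂ] Module.End ℂ W) (w : W),
      (∀ i j : Ind m n, iltI i j → ρW (gen pI i j) w = 0) →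
      (∀ i : Ind m n, ρW (gen pI i i) w = lam i • w) →
      ∃ g : L →ₗ[ℂ] W, g v = w ∧ ∀ u x, g (ρ u x) = ρW u (g x)

attribute [instance] VermaM.acg VermaM.mod

/-- The predicate expressing that `Θ` is the representation of `U(gl(m+1|n))` on
`F_a ⊗ L` obtained via `φ_R` from a representation `ρ` of `U(gl(m|n))` on `L`, where the
central element `R` acts by the scalar `r`; the formulas for the action of the generators on
pure tensors (with the appropriate Koszul signs) are written out explicitly. -/
def IsTensorRep {m n : ℕ} (a r : ℂ) {L : Type} [AddCommGroup L] [Module ℂ L]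
    (ρ : UEA (Ind m n) pI →ₐ[ℂ] Module.End ℂ L)
    (Θ : UEA (Ind (m+1) n) pI →ₐ[ℂ] Module.End ℂ (FaSp m n ⊗[ℂ] L)) : Prop :=
  (∀ (c d : Ind m n) (x : FaMon m n) (v : L),
    Θ (gen pI (emb c) (emb d)) (amono x ⊗ₜ[ℂ] v) =
      (aTD a (emb c) (emb d)) (amono x) ⊗ₜ[ℂ] v
      + ((-1 : ℂ) ^ ((pI c + pI d) * parM x)) • (amono x ⊗ₜ[ℂ] (ρ (gen pI c d) v))
      + (if c = d then (((-1 : ℂ) ^ (pI c * pI d)) * r) • (amono x ⊗ₜ[ℂ] v) else 0)) ∧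
  (∀ (c : Ind m n) (x : FaMon m n) (v : L),
    Θ (gen pI (emb c) z0) (amono x ⊗ₜ[ℂ] v) =
      (aTD a (emb c) z0) (amono x) ⊗ₜ[ℂ] v
      - ∑ j : Ind m n, (((-1 : ℂ) ^ (pI c * pI j)) * ((-1 : ℂ) ^ ((pI c + pI j) * parM x))) •
          ((aDiv j (amono x)) ⊗ₜ[ℂ] (ρ (gen pI c j) v))) ∧
  (∀ (d : Ind m n) (x : FaMon m n) (v : L),
    Θ (gen pI z0 (emb d)) (amono x ⊗ₜ[ℂ] v) = (aTD a z0 (emb d)) (amono x) ⊗ₜ[ℂ] v) ∧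
  (∀ (x : FaMon m n) (v : L),
    Θ (gen pI z0 z0) (amono x ⊗ₜ[ℂ] v) =
      (aTD a z0 z0) (amono x) ⊗ₜ[ℂ] v + r • (amono x ⊗ₜ[ℂ] v))

/-- The shifted weight `λ̃ = (a+r, λ_1+r, …, λ_m+r, λ_{1̄}−r, …, λ_{n̄}−r)`. -/
def lamTilde {m n : ℕ} (a r : ℂ) (lam : Ind m n → ℂ) : Ind (m+1) n → ℂ :=
  Sum.elim (Fin.cases (a + r) fun k => lam (Sum.inl k) + r) fun k => lam (Sum.inr k) - r

/-- The Weyl vector `ρ_{m|n} = (m, m−1, …, 1, −1, −2, …, −n)`. -/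
def rhoS {m n : ℕ} : Ind m n → ℂ := Sum.elim (fun k => (m : ℂ) - k) fun k => -(k : ℂ) - 1

/-- Antidominance of a weight of `gl(m|n)`:
`⟨λ+ρ, α^∨⟩ ∉ ℤ_{>0}` for all positive even roots `α`. -/
def Antidom {m n : ℕ} (lam : Ind m n → ℂ) : Prop :=
  (∀ i j : Fin m, i < j → ¬∃ N : ℕ,
    (lam (Sum.inl i) + rhoS (m:=m) (n:=n) (Sum.inl i)) - (lam (Sum.inl j) + rhoS (m:=m) (n:=n) (Sum.inl j)) = (N : ℂ) + 1) ∧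
  (∀ i j : Fin n, i < j → ¬∃ N : ℕ,
    (lam (Sum.inr i) + rhoS (m:=m) (n:=n) (Sum.inr i)) - (lam (Sum.inr j) + rhoS (m:=m) (n:=n) (Sum.inr j)) = (N : ℂ) + 1)

/-- Typicality of a weight of `gl(m|n)`:
`(λ+ρ, α) ≠ 0` for all positive odd isotropic roots `α = δ_i − ε_j`. -/
def Typical {m n : ℕ} (lam : Ind m n → ℂ) : Prop :=
  ∀ (i : Fin m) (j : Fin n),
    (lam (Sum.inl i) + rhoS (m:=m) (n:=n) (Sum.inl i)) + (lam (Sum.inr j) + rhoS (m:=m) (n:=n) (Sum.inr j)) ≠ 0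

/-!
When `(a, λ)` is nonresonant, `t_0^a ⊗ v` generates `F_a ⊗ M(λ)`, where `v` is the highest weight
vector of `M(λ)`: modulo the vectors already reached, `e_{c0}` multiplies `x ⊗ v` by `t_c/t_0` and a
nonzero scalar. As `t_0^a ⊗ v` is a highest weight vector of weight `λ̃`, the universal property of
`M(λ̃)` gives a surjection `f : M(λ̃) → F_a ⊗ M(λ)`. Conversely `M(λ̃)` is spanned by the
ordered monomials in the odd and even `e_{c0}` applied to the `gl(m|n)`-submodule generated by its
highest weight vector, so there is a linear surjection `F_a ⊗ M(λ) → M(λ̃)`. The composite is a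
surjective endomorphism of `F_a ⊗ M(λ)` which preserves the finite-dimensional eigenspaces of a
grading element, hence is injective; therefore so is `f`. This needs the spanning half of the
Poincaré–Birkhoff–Witt theorem only.
-/

section Hopfian

theorem eq_of_le_of_iSupIndep {α κ : Type*} [CompleteLattice α] [IsModularLattice α]
    {s t : κ → α} (hle : s ≤ t) (ht : iSupIndep t) (hs : ⨆ i, s i = ⊤) : s = t := by
  refine le_antisymm hle fun k => ?_
  have htop : s k ⊔ ⨆ (j) (_ : j ≠ k), t j = ⊤ := by
    rw [eq_top_iff, ← hs]
    refine iSup_le fun j => ?_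
    rcases eq_or_ne j k with rfl | hjk
    · exact le_sup_left
    · exact le_sup_of_le_right (le_iSup₂_of_le j hjk (hle j))
  calc t k = (s k ⊔ ⨆ (j) (_ : j ≠ k), t j) ⊓ t k := by rw [htop, top_inf_eq]
    _ = s k ⊔ (⨆ (j) (_ : j ≠ k), t j) ⊓ t k := sup_inf_assoc_of_le _ (hle k)
    _ = s k := by rw [(iSupIndep_def.1 ht k).symm.eq_bot, sup_bot_eq]
    _ ≤ s k := le_rfl

variable {K X : Type*} [Field K] [AddCommGroup X] [Module K X]

theorem injective_of_surjective_of_iSupIndep {κ : Type*} {W : κ → Submodule K X}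
    [∀ k, FiniteDimensional K (W k)] (hW : iSupIndep W) (htop : ⨆ k, W k = ⊤)
    {Φ : Module.End K X} (hmap : ∀ k, (W k).map Φ ≤ W k) (hΦ : Function.Surjective Φ) :
    Function.Injective Φ := by
  classical
  have hmap_eq : (fun k => (W k).map Φ) = W := by
    refine eq_of_le_of_iSupIndep hmap hW ?_
    rw [← Submodule.map_iSup, htop, Submodule.map_top, LinearMap.range_eq_top.2 hΦ]
  have hker : ∀ k, ∀ w ∈ W k, Φ w = 0 → w = 0 := fun k w hw h0 => by
    have hmem : ∀ w ∈ W k, Φ w ∈ W k := fun w hw => hmap k (Submodule.mem_map_of_mem hw)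
    have hsurj : Function.Surjective (Φ.restrict hmem) := fun z => by
      obtain ⟨y, hy, hyz⟩ : (z : X) ∈ (W k).map Φ := (congrFun hmap_eq k).symm ▸ z.2
      exact ⟨⟨y, hy⟩, Subtype.ext hyz⟩
    have hinj := LinearMap.injective_iff_surjective.2 hsurj
    exact congrArg Subtype.val (@hinj ⟨w, hw⟩ 0 (Subtype.ext (by simpa using h0)))
  refine (injective_iff_map_eq_zero Φ).2 fun x hx => ?_
  obtain ⟨y, rfl⟩ := (Submodule.mem_iSup_iff_exists_dfinsupp' W x).1 (htop ▸ Submodule.mem_top)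
  have hy : ∀ k ∈ y.support, Φ (y k) = 0 :=
    (iSupIndep_iff_finsetSum_eq_zero_imp_eq_zero W).1 hW y.support (fun k => Φ (y k))
      (fun k _ => hmap k (Submodule.mem_map_of_mem (y k).2)) (by simpa [DFinsupp.sum] using hx)
  exact Finset.sum_eq_zero fun k hk => hker k _ (y k).2 (hy k hk)

theorem iSup_span_image_fiber {κ Ω : Type*} {b : κ → X}
    (hb : Submodule.span K (Set.range b) = ⊤) (χ : κ → Ω) :
    ⨆ μ, Submodule.span K (b '' {i | χ i = μ}) = ⊤ := by
  rw [eq_top_iff, ← hb, Submodule.span_le]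
  rintro _ ⟨i, rfl⟩
  exact Submodule.mem_iSup_of_mem (χ i) (Submodule.subset_span ⟨i, rfl, rfl⟩)

theorem eigenspace_eq_span {κ : Type*} {T : Module.End K X} {b : κ → X} {χ : κ → K}
    (hb : Submodule.span K (Set.range b) = ⊤) (hT : ∀ i, T (b i) = χ i • b i) (μ : K) :
    T.eigenspace μ = Submodule.span K (b '' {i | χ i = μ}) := by
  have hle : (fun μ => Submodule.span K (b '' {i | χ i = μ})) ≤ T.eigenspace := by
    refine fun μ => Submodule.span_le.2 ?_
    rintro _ ⟨i, rfl, rfl⟩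
    exact Module.End.mem_eigenspace_iff.2 (hT i)
  exact (congrFun (eq_of_le_of_iSupIndep hle T.eigenspaces_iSupIndep
    (iSup_span_image_fiber hb χ)) μ).symm

theorem injective_of_surjective_of_weights {κ : Type*} {T Φ : Module.End K X} {b : κ → X}
    {χ : κ → K} (hb : Submodule.span K (Set.range b) = ⊤) (hT : ∀ i, T (b i) = χ i • b i)
    (hTΦ : ∀ i, T (Φ (b i)) = χ i • Φ (b i)) (hfin : ∀ μ, {i | χ i = μ}.Finite)
    (hΦ : Function.Surjective Φ) : Function.Injective Φ := by
  have hE := eigenspace_eq_span hb hT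
  have hfd : ∀ μ, FiniteDimensional K (T.eigenspace μ) := fun μ =>
    hE μ ▸ FiniteDimensional.span_of_finite K ((hfin μ).image b)
  refine injective_of_surjective_of_iSupIndep T.eigenspaces_iSupIndep ?_ (fun μ => ?_) hΦ
  · rw [iSup_congr hE, iSup_span_image_fiber hb]
  · conv_lhs => rw [hE]
    rw [Submodule.map_span_le]
    rintro _ ⟨i, rfl, rfl⟩
    exact Module.End.mem_eigenspace_iff.2 (hTΦ i)

end Hopfian

section EnvelopingAlgebra

theorem neg_one_pow_add_self_mul (a b : ℕ) : (-1 : ℂ) ^ ((a + a) * b) = 1 :=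
  (Even.mul_right ⟨a, rfl⟩ b).neg_one_pow

variable {ι κ : Type} [DecidableEq ι] [DecidableEq κ] {p : ι → ℕ}
variable {A : Type*} [Ring A] [Algebra ℂ A]

/-- The defining relations of `U(gl)`, for a family `φ i j` standing for the images of the
generators `e_{ij}`; the bracket is moved to the right-hand side. -/
def SatisfiesGlRel (p : ι → ℕ) (φ : ι → ι → A) : Prop :=
  ∀ i j k l, φ i j * φ k l = (-1 : ℂ) ^ ((p i + p j) * (p k + p l)) • (φ k l * φ i j) +
    ((if j = k then φ i l else 0)
      - (-1 : ℂ) ^ ((p i + p j) * (p k + p l)) • (if l = i then φ k j else 0))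

theorem satisfiesGlRel_gen (p : ι → ℕ) : SatisfiesGlRel p (gen p) := fun i j k l => by
  have h := RingQuot.mkAlgHom_rel ℂ (glRel.basic (p := p) i j k l)
  simp only [map_sub, map_mul, map_smul, apply_ite (RingQuot.mkAlgHom ℂ (glRel ι p)),
    map_zero] at h
  exact sub_eq_iff_eq_add'.1 h

theorem SatisfiesGlRel.comp {q : κ → ℕ} {φ : κ → κ → A} (hφ : SatisfiesGlRel q φ) {f : ι → κ}
    (hf : Function.Injective f) (hq : ∀ i, q (f i) = p i) :
    SatisfiesGlRel p fun i j => φ (f i) (f j) := fun i j k l => by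
  simpa only [hq, hf.eq_iff] using hφ (f i) (f j) (f k) (f l)

theorem SatisfiesGlRel.sub_supertrace {φ : ι → ι → A} (hφ : SatisfiesGlRel p φ) (r : ℂ) :
    SatisfiesGlRel p fun i j => φ i j - (if i = j then (-1 : ℂ) ^ p i * r else 0) • 1 := by
  intro i j k l
  have hsign : (-1 : ℂ) ^ p l = (-1 : ℂ) ^ ((p l + p k) * (p k + p l)) * (-1 : ℂ) ^ p k := by
    rw [← pow_add]
    exact neg_one_pow_congr (by grind)
  have hij : ((-1 : ℂ) ^ ((p i + p j) * (p k + p l))) * (if i = j then (-1 : ℂ) ^ p i * r else 0) =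
      if i = j then (-1 : ℂ) ^ p i * r else 0 := by
    split_ifs with h
    · rw [h, neg_one_pow_add_self_mul, one_mul]
    · exact mul_zero _
  have hkl : ((-1 : ℂ) ^ ((p i + p j) * (p k + p l))) * (if k = l then (-1 : ℂ) ^ p k * r else 0) =
      if k = l then (-1 : ℂ) ^ p k * r else 0 := by
    split_ifs with h
    · rw [h, mul_comm (p i + p j), neg_one_pow_add_self_mul, one_mul]
    · exact mul_zero _
  have hbracket : (if j = k then φ i l - (if i = l then (-1 : ℂ) ^ p i * r else 0) • (1 : A) else 0)
      - (-1 : ℂ) ^ ((p i + p j) * (p k + p l)) •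
        (if l = i then φ k j - (if k = j then (-1 : ℂ) ^ p k * r else 0) • (1 : A) else 0) =
      (if j = k then φ i l else 0)
      - (-1 : ℂ) ^ ((p i + p j) * (p k + p l)) • (if l = i then φ k j else 0) := by
    by_cases hjk : j = k <;> by_cases hli : l = i
    · subst hjk hli
      simp only [if_true, smul_sub, smul_smul, ← mul_assoc, ← hsign]
      abel
    all_goals simp [hjk, hli, eq_comm (a := i) (b := l), eq_comm (a := k) (b := j)]
  rw [hbracket]
  simp only [sub_mul, mul_sub, smul_mul_assoc, mul_smul_comm, one_mul, mul_one, hφ i j k l,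
    smul_sub, smul_smul, hij, hkl]
  rw [mul_left_comm, hkl]
  module

/-- The homomorphism out of `U(gl)` determined by images of the generators satisfying the
defining relations. -/
def UEA.lift (φ : ι → ι → A) (hφ : SatisfiesGlRel p φ) : UEA ι p →ₐ[ℂ] A :=
  RingQuot.liftAlgHom ℂ ⟨FreeAlgebra.lift ℂ fun q => φ q.1 q.2, by
    rintro _ _ ⟨i, j, k, l⟩
    simp only [map_sub, map_mul, map_smul, FreeAlgebra.lift_ι_apply,
      apply_ite (FreeAlgebra.lift ℂ fun q : ι × ι => φ q.1 q.2), map_zero]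
    exact sub_eq_iff_eq_add'.2 (hφ i j k l)⟩

@[simp]
theorem UEA.lift_gen (φ : ι → ι → A) (hφ : SatisfiesGlRel p φ) (i j : ι) :
    UEA.lift φ hφ (gen p i j) = φ i j := by
  simp [UEA.lift, gen]

variable {L : Type*} [AddCommGroup L] [Module ℂ L] (ρ : UEA ι p →ₐ[ℂ] Module.End ℂ L)

theorem rep_gen_gen (i j k l : ι) (x : L) :
    ρ (gen p i j) (ρ (gen p k l) x) =
      (-1 : ℂ) ^ ((p i + p j) * (p k + p l)) • ρ (gen p k l) (ρ (gen p i j) x) +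
      ((if j = k then ρ (gen p i l) x else 0)
        - (-1 : ℂ) ^ ((p i + p j) * (p k + p l)) • (if l = i then ρ (gen p k j) x else 0)) := by
  have h := congrArg (fun u => ρ u x) (satisfiesGlRel_gen p i j k l)
  simpa only [map_mul, map_add, map_sub, map_smul, Module.End.mul_apply, LinearMap.add_apply,
    LinearMap.sub_apply, LinearMap.smul_apply, apply_ite ρ, map_zero,
    apply_ite (fun f : Module.End ℂ L => f x), LinearMap.zero_apply] using h

theorem stable_of_gen {N : Submodule ℂ L} (h : ∀ i j, ∀ x ∈ N, ρ (gen p i j) x ∈ N)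
    (u : UEA ι p) {x : L} (hx : x ∈ N) : ρ u x ∈ N := by
  obtain ⟨u, rfl⟩ := RingQuot.mkAlgHom_surjective ℂ (glRel ι p) u
  induction u using FreeAlgebra.induction generalizing x with
  | grade0 c => simpa using N.smul_mem c hx
  | grade1 q => exact h q.1 q.2 x hx
  | mul u w hu hw => simpa using hu (hw hx)
  | add u w hu hw => simpa using N.add_mem (hu hx) (hw hx)

/-- The product of a list of generators `e_{ij}`, `(i, j) ∈ S`. -/
def genWord (p : ι → ℕ) {S : Set (ι × ι)} (l : List S) : UEA ι p :=
  (l.map fun s => gen p s.1.1 s.1.2).prod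

theorem rep_genWord_nil {S : Set (ι × ι)} (x : L) : ρ (genWord p ([] : List S)) x = x := by
  simp [genWord]

theorem rep_genWord_cons {S : Set (ι × ι)} (s : S) (l : List S) (x : L) :
    ρ (genWord p (s :: l)) x = ρ (gen p s.1.1 s.1.2) (ρ (genWord p l) x) := by
  simp [genWord]

/-- The span of the vectors obtained by applying words in the generators `e_{ij}`, `(i, j) ∈ S`, to
the vectors of `B`. -/
def wordSpan (S : Set (ι × ι)) (B : Set L) : Submodule ℂ L :=
  Submodule.span ℂ (Set.image2 (fun (l : List S) b => ρ (genWord p l) b) Set.univ B)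

variable {S : Set (ι × ι)} {B : Set L}

theorem rep_genWord_mem_wordSpan (l : List S) {b : L} (hb : b ∈ B) :
    ρ (genWord p l) b ∈ wordSpan ρ S B :=
  Submodule.subset_span ⟨l, Set.mem_univ l, b, hb, rfl⟩

theorem subset_wordSpan : B ⊆ wordSpan ρ S B := fun b hb => by
  simpa only [rep_genWord_nil, SetLike.mem_coe] using rep_genWord_mem_wordSpan ρ ([] : List S) hb

theorem map_mem_of_mem_wordSpan {M : Type*} [AddCommGroup M] [Module ℂ M] {N : Submodule ℂ M}
    (f : L →ₗ[ℂ] M) (h : ∀ (l : List S), ∀ b ∈ B, f (ρ (genWord p l) b) ∈ N) {x : L}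
    (hx : x ∈ wordSpan ρ S B) : f x ∈ N := by
  refine (Submodule.map_span_le f _ N).2 ?_ (Submodule.mem_map_of_mem hx)
  rintro _ ⟨l, -, b, hb, rfl⟩
  exact h l b hb

theorem rep_gen_mem_wordSpan (s : S) {x : L} (hx : x ∈ wordSpan ρ S B) :
    ρ (gen p s.1.1 s.1.2) x ∈ wordSpan ρ S B :=
  map_mem_of_mem_wordSpan ρ _
    (fun l _ hb => rep_genWord_cons ρ s l _ ▸ rep_genWord_mem_wordSpan ρ (s :: l) hb) hx

theorem wordSpan_le {N : Submodule ℂ L} (hB : B ⊆ N)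
    (hN : ∀ s : S, ∀ x ∈ N, ρ (gen p s.1.1 s.1.2) x ∈ N) : wordSpan ρ S B ≤ N := fun x hx => by
  refine map_mem_of_mem_wordSpan ρ LinearMap.id (fun l b hb => ?_) hx
  rw [LinearMap.id_apply]
  induction l with
  | nil => exact (rep_genWord_nil ρ b).symm ▸ hB hb
  | cons s l ih => exact (rep_genWord_cons ρ s l b).symm ▸ hN s _ ih

/-- Commuting `e_{ij}` past the letters of a word only produces words with fewer letters. -/
theorem rep_mem_wordSpan (h : ∀ i j, ∀ b ∈ B, ρ (gen p i j) b ∈ wordSpan ρ S B) (u : UEA ι p)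
    {x : L} (hx : x ∈ wordSpan ρ S B) : ρ u x ∈ wordSpan ρ S B := by
  have hword : ∀ (l : List S), ∀ b ∈ B, ∀ i j,
      ρ (gen p i j) (ρ (genWord p l) b) ∈ wordSpan ρ S B := by
    intro l b hb
    induction l with
    | nil => simpa only [rep_genWord_nil] using fun i j => h i j b hb
    | cons s l ih =>
      intro i j
      have hite : ∀ (P : Prop) [Decidable P] i j,
          (if P then ρ (gen p i j) (ρ (genWord p l) b) else 0) ∈ wordSpan ρ S B := fun P _ i j => by
        split_ifs
        exacts [ih i j, Submodule.zero_mem _]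
      rw [rep_genWord_cons, rep_gen_gen]
      exact add_mem (Submodule.smul_mem _ _ (rep_gen_mem_wordSpan ρ s (ih i j)))
        (sub_mem (hite _ _ _) (Submodule.smul_mem _ _ (hite _ _ _)))
  exact stable_of_gen ρ
    (fun i j _ hx => map_mem_of_mem_wordSpan ρ _ (fun l b hb => hword l b hb i j) hx) u hx

end EnvelopingAlgebra

section AdWeight

variable {R A : Type*} [CommRing R] [Ring A] [Algebra R A]

/-- `P` is an eigenvector of `ad T` with eigenvalue `μ`. -/
def HasAdWeight (T P : A) (μ : R) : Prop := T * P = P * T + μ • P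

namespace HasAdWeight

variable {T P Q : A} {μ ν : R}

theorem one (T : A) : HasAdWeight T 1 (0 : R) := by
  simp [HasAdWeight]

theorem mul (hP : HasAdWeight T P μ) (hQ : HasAdWeight T Q ν) :
    HasAdWeight T (P * Q) (μ + ν) := by
  unfold HasAdWeight at *
  rw [← mul_assoc, hP, add_mul, mul_assoc, hQ, mul_add, smul_mul_assoc, mul_smul_comm, mul_assoc]
  module

theorem pow (hP : HasAdWeight T P μ) (k : ℕ) : HasAdWeight T (P ^ k) (k * μ) := by
  induction k with
  | zero => simpa using one (R := R) T
  | succ k ih => simpa only [pow_succ, Nat.cast_succ, add_mul, one_mul] using ih.mul hP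

theorem list_prod {κ : Type*} {P : κ → A} {μ : κ → R} (h : ∀ i, HasAdWeight T (P i) (μ i))
    (l : List κ) : HasAdWeight T (l.map P).prod (l.map μ).sum := by
  induction l with
  | nil => exact one T
  | cons i l ih => simpa using (h i).mul ih

theorem apply_eq_smul {L : Type*} [AddCommGroup L] [Module R L] (h : HasAdWeight T P μ)
    (ρ : A →ₐ[R] Module.End R L) {x : L} (hx : ρ T x = ν • x) :
    ρ T (ρ P x) = (ν + μ) • ρ P x := by
  have h' := congrArg (fun u => ρ u x) h
  simp only [map_mul, map_add, map_smul, Module.End.mul_apply, LinearMap.add_apply,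
    LinearMap.smul_apply, hx] at h'
  rw [h', add_smul]

end HasAdWeight

variable {ι : Type} [DecidableEq ι] [Fintype ι] {p : ι → ℕ}

/-- The element `∑ᵢ hᵢ e_{ii}` of the Cartan subalgebra. -/
def cartan (p : ι → ℕ) (h : ι → ℂ) : UEA ι p := ∑ i, h i • gen p i i

theorem hasAdWeight_cartan_gen (h : ι → ℂ) (k l : ι) :
    HasAdWeight (cartan p h) (gen p k l) (h k - h l) := by
  have hterm : ∀ i, (h i • gen p i i) * gen p k l = gen p k l * (h i • gen p i i) +
      ((if i = k then h i • gen p i l else 0) - (if l = i then h i • gen p k i else 0)) := by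
    intro i
    rw [smul_mul_assoc, satisfiesGlRel_gen p i i k l, neg_one_pow_add_self_mul, one_smul, one_smul,
      smul_add, mul_smul_comm, smul_sub, smul_ite, smul_ite, smul_zero]
  rw [HasAdWeight, cartan, Finset.sum_mul, Finset.mul_sum, Finset.sum_congr rfl fun i _ => hterm i,
    Finset.sum_add_distrib, Finset.sum_sub_distrib]
  simp only [Finset.sum_ite_eq, Finset.sum_ite_eq', Finset.mem_univ, if_true]
  exact congrArg _ (sub_smul (h k) (h l) (gen p k l)).symm

end AdWeight

section QCommuting

variable {A κ : Type*} [Ring A] [Algebra ℂ A] [DecidableEq κ] {y : κ → A} {q : κ → κ → ℂ}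

theorem mul_pow_eq_smul_of_qcommute {x z : A} {s : ℂ} (h : x * z = s • (z * x)) (k : ℕ) :
    x * z ^ k = s ^ k • (z ^ k * x) := by
  induction k with
  | zero => simp
  | succ k ih =>
    rw [pow_succ, ← mul_assoc, ih, smul_mul_assoc, mul_assoc, h, mul_smul_comm, smul_smul,
      ← pow_succ, mul_assoc]

theorem exists_mul_list_prod_pow_eq_smul (hq : ∀ i j, y i * y j = q i j • (y j * y i)) (e : κ → ℕ)
    (c : κ) {l : List κ} (hl : l.Nodup) (hc : c ∈ l) :
    ∃ s : ℂ, y c * (l.map fun i => y i ^ e i).prod =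
      s • (l.map fun i => y i ^ (e + Pi.single c 1 : κ → ℕ) i).prod := by
  induction l with
  | nil => simp at hc
  | cons d l ih =>
    obtain ⟨hd, hl⟩ := List.nodup_cons.1 hl
    simp only [List.map_cons, List.prod_cons]
    rcases eq_or_ne c d with rfl | hcd
    · have htail :
          (l.map fun i => y i ^ (e + Pi.single c 1 : κ → ℕ) i) = l.map fun i => y i ^ e i :=
        List.map_congr_left fun i hi => by
          simp [Pi.single_eq_of_ne (show i ≠ c from fun h => hd (h ▸ hi))]
      exact ⟨1, by rw [htail, ← mul_assoc, ← pow_succ']; simp⟩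
    · obtain ⟨s, hs⟩ := ih hl ((List.mem_cons.1 hc).resolve_left hcd)
      refine ⟨q c d ^ e d * s, ?_⟩
      rw [← mul_assoc, mul_pow_eq_smul_of_qcommute (hq c d), smul_mul_assoc, mul_assoc, hs,
        mul_smul_comm, smul_smul]
      simp [Pi.single_eq_of_ne hcd.symm]

end QCommuting

section Indices

variable {m n : ℕ}

/-- The position of an index in the total order of `I`, counted from `0`. -/
def idxRank : Ind m n → ℕ := Sum.elim (fun i => i) fun i => m + i

theorem iltI_iff_idxRank_lt {i j : Ind m n} : iltI i j ↔ idxRank i < idxRank j := by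
  rcases i with i | i <;> rcases j with j | j <;> simp [iltI, idxRank] <;> omega

theorem idxRank_injective : Function.Injective (idxRank : Ind m n → ℕ) := by
  rintro (i | i) (j | j) h <;> simp [idxRank] at h ⊢ <;> omega

theorem idxRank_emb (c : Ind m n) : idxRank (emb c) = idxRank c + 1 := by
  cases c <;> simp [emb, idxRank]; omega

theorem idxRank_z0 : idxRank (z0 : Ind (m + 1) n) = 0 := rfl

theorem iltI_z0_emb (c : Ind m n) : iltI z0 (emb c) := by
  simp [iltI_iff_idxRank_lt, idxRank_emb, idxRank_z0]

theorem not_iltI_z0 (i : Ind (m + 1) n) : ¬iltI i z0 := by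
  simp [iltI_iff_idxRank_lt, idxRank_z0]

theorem iltI_emb_iff {c d : Ind m n} : iltI (emb c) (emb d) ↔ iltI c d := by
  simp [iltI_iff_idxRank_lt, idxRank_emb]

theorem iltI_ne {i j : Ind m n} (h : iltI i j) : i ≠ j := by
  rintro rfl
  exact lt_irrefl _ (iltI_iff_idxRank_lt.1 h)

theorem iltI_trichotomy (i j : Ind m n) : iltI i j ∨ i = j ∨ iltI j i := by
  simpa only [iltI_iff_idxRank_lt, idxRank_injective.eq_iff] using
    lt_trichotomy (idxRank i) (idxRank j)

theorem pI_emb (c : Ind m n) : pI (emb c) = pI c := by cases c <;> rfl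

theorem pI_z0 : pI (z0 : Ind (m + 1) n) = 0 := rfl

theorem neg_one_pow_pI_mul_self (c : Ind m n) : (-1 : ℂ) ^ (pI c * pI c) = (-1) ^ pI c := by
  rcases c with c | c <;> simp [pI]

theorem eq_z0_or_exists_eq_emb (i : Ind (m + 1) n) : i = z0 ∨ ∃ c : Ind m n, i = emb c := by
  rcases i with i | i
  · rcases Fin.eq_zero_or_eq_succ i with rfl | ⟨k, rfl⟩
    · exact Or.inl rfl
    · exact Or.inr ⟨Sum.inl k, rfl⟩
  · exact Or.inr ⟨Sum.inr i, rfl⟩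

theorem sum_eq_z0_add_sum_emb {M : Type*} [AddCommMonoid M] (f : Ind (m + 1) n → M) :
    ∑ i, f i = f z0 + ∑ c : Ind m n, f (emb c) := by
  rw [Fintype.sum_sum_type, Fin.sum_univ_succ, Fintype.sum_sum_type, add_assoc]
  rfl

end Indices

section Monomials

variable {m n : ℕ}

/-- The exponent of `t_c` in a monomial of `F_a`. -/
def expo (x : FaMon m n) : Ind m n → ℕ := Sum.elim x.1 fun i => (x.2 i).toNat

/-- The total degree of a monomial of `F_a` in the variables `t_c`, `c ∈ I`. -/
def degree (x : FaMon m n) : ℕ := ∑ c, expo x c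

theorem expo_injective : Function.Injective (expo : FaMon m n → Ind m n → ℕ) := fun x y h => by
  refine Prod.ext (funext fun i => congrFun h (Sum.inl i)) (funext fun i => ?_)
  have hi : (x.2 i).toNat = (y.2 i).toNat := congrFun h (Sum.inr i)
  revert hi
  cases x.2 i <;> cases y.2 i <;> simp

theorem expo_hwMon : expo (hwMon m n) = 0 := by
  ext (i | i) <;> rfl

theorem degree_hwMon : degree (hwMon m n) = 0 := by
  simp [degree, expo_hwMon]

theorem eq_hwMon_of_degree_eq_zero {x : FaMon m n} (hx : degree x = 0) : x = hwMon m n := by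
  refine expo_injective (expo_hwMon ▸ funext fun c => ?_)
  exact Finset.sum_eq_zero_iff.1 hx c (Finset.mem_univ c)

theorem cntA_eq_sum (b : Fin n → Bool) : cntA b = ∑ i, (b i).toNat := by
  rw [cntA, Finset.card_filter]
  exact Finset.sum_congr rfl fun i _ => by cases b i <;> rfl

theorem parM_eq_sum (x : FaMon m n) : parM x = ∑ c, pI c * expo x c := by
  simp [parM, cntA_eq_sum, Fintype.sum_sum_type, pI, expo]

theorem expo_update_inl (x : FaMon m n) (i : Fin m) (k : ℕ) :
    expo (Function.update x.1 i k, x.2) = Function.update (expo x) (Sum.inl i) k := by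
  ext (j | j) <;> simp [expo, Function.update_apply]

theorem expo_update_inr (x : FaMon m n) (i : Fin n) (b : Bool) :
    expo (x.1, Function.update x.2 i b) = Function.update (expo x) (Sum.inr i) b.toNat := by
  ext (j | j)
  · simp [expo, Function.update_apply]
  · by_cases h : j = i <;> simp [expo, Function.update_apply, h]

/-- The relation `x' = x t_c` between monomials, up to sign. -/
def IsRaise (c : Ind m n) (x x' : FaMon m n) : Prop := expo x' = expo x + Pi.single c 1

theorem add_single_eq_update (e : Ind m n → ℕ) (c : Ind m n) :
    e + Pi.single c 1 = Function.update e c (e c + 1) := by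
  ext d
  by_cases h : d = c
  · subst h
    simp
  · simp [h]

theorem isRaise_inl {i : Fin m} {x x' : FaMon m n} :
    IsRaise (Sum.inl i) x x' ↔ x' = (Function.update x.1 i (x.1 i + 1), x.2) := by
  rw [← expo_injective.eq_iff, expo_update_inl, IsRaise, add_single_eq_update]
  rfl

theorem isRaise_inr {i : Fin n} {x x' : FaMon m n} :
    IsRaise (Sum.inr i) x x' ↔ x.2 i = false ∧ x' = (x.1, Function.update x.2 i true) := by
  rw [← expo_injective.eq_iff, expo_update_inr, IsRaise, add_single_eq_update]
  constructor
  · intro h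
    have hi : (x.2 i).toNat = 0 := by
      have hle : (x'.2 i).toNat ≤ 1 := Bool.toNat_le _
      have hi : (x'.2 i).toNat = (x.2 i).toNat + 1 := by simpa [expo] using congrFun h (Sum.inr i)
      omega
    exact ⟨by simpa using hi, by rw [h, expo, Sum.elim_inr, hi]; rfl⟩
  · rintro ⟨hi, h⟩
    rw [h, expo, Sum.elim_inr, hi]
    rfl

theorem exists_isRaise_iff {c : Ind m n} {x : FaMon m n} :
    (∃ x', IsRaise c x x') ↔ pI c * expo x c = 0 := by
  rcases c with i | i
  · simp [isRaise_inl, pI]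
  · simp [isRaise_inr, pI, expo]

theorem exists_isRaise_to {c : Ind m n} {x' : FaMon m n} (h : expo x' c ≠ 0) :
    ∃ x, IsRaise c x x' := by
  rcases c with i | i
  · refine ⟨(Function.update x'.1 i (x'.1 i - 1), x'.2), isRaise_inl.2 ?_⟩
    have hi : x'.1 i ≠ 0 := h
    simp [Nat.sub_add_cancel (Nat.pos_of_ne_zero hi)]
  · refine ⟨(x'.1, Function.update x'.2 i false), isRaise_inr.2 ?_⟩
    have hi : x'.2 i = true := by simpa [expo] using h
    simp [← hi]

/-- The sign that the odd variable `t_c` picks up when it is moved to its place in the monomial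
`x`. -/
def koszulSign (c : Ind m n) (x : FaMon m n) : ℂ :=
  (-1) ^ (pI c * ∑ k with idxRank k < idxRank c, pI k * expo x k)

theorem koszulSign_mul_self (c : Ind m n) (x : FaMon m n) :
    koszulSign c x * koszulSign c x = 1 := by
  rw [koszulSign, ← mul_pow, neg_mul_neg, one_mul, one_pow]

theorem koszulSign_inl (i : Fin m) (x : FaMon m n) : koszulSign (Sum.inl i) x = 1 := by
  simp [koszulSign, pI]

theorem koszulSign_inr (i : Fin n) (x : FaMon m n) :
    koszulSign (Sum.inr i) x = (-1) ^ cntB x.2 i := by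
  have hcnt : cntB x.2 i = ∑ k with idxRank k < idxRank (Sum.inr i : Ind m n), pI k * expo x k := by
    rw [cntB, Finset.card_filter, Finset.sum_filter, Fintype.sum_sum_type]
    simp only [pI, expo, idxRank, Sum.elim_inl, Sum.elim_inr, zero_mul, ite_self,
      Finset.sum_const_zero, zero_add, one_mul, add_lt_add_iff_left, Fin.val_fin_lt]
    refine Finset.sum_congr rfl fun j _ => ?_
    cases x.2 j <;> simp
  rw [koszulSign, ← hcnt]
  simp [pI]

namespace IsRaise

variable {c : Ind m n} {x x' : FaMon m n}

theorem expo_apply (h : IsRaise c x x') (d : Ind m n) :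
    expo x' d = expo x d + if d = c then 1 else 0 := by
  rw [show expo x' = _ from h, Pi.add_apply, Pi.single_apply]

theorem expo_self (h : IsRaise c x x') : expo x' c = expo x c + 1 := by
  simp [h.expo_apply]

theorem expo_of_ne (h : IsRaise c x x') {d : Ind m n} (hd : d ≠ c) : expo x' d = expo x d := by
  simp [h.expo_apply, hd]

theorem degree_eq (h : IsRaise c x x') : degree x' = degree x + 1 := by
  simp only [degree, h.expo_apply, Finset.sum_add_distrib, Finset.sum_ite_eq', Finset.mem_univ,
    if_true]

theorem parM_eq (h : IsRaise c x x') : parM x' = parM x + pI c := by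
  simp only [parM_eq_sum, h.expo_apply, mul_add, Finset.sum_add_distrib, mul_ite, mul_one,
    mul_zero, Finset.sum_ite_eq', Finset.mem_univ, if_true]

theorem koszulSign_eq (h : IsRaise c x x') (d : Ind m n) :
    koszulSign d x' =
      koszulSign d x * if idxRank c < idxRank d then (-1) ^ (pI d * pI c) else 1 := by
  simp only [koszulSign, h.expo_apply, mul_add, Finset.sum_add_distrib, mul_ite, mul_one, mul_zero,
    Finset.sum_ite_eq', Finset.mem_filter, Finset.mem_univ, true_and, pow_add]
  split_ifs <;> simp

end IsRaise

end Monomials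

section Operators

variable {m n : ℕ}

theorem mkOp_amono {M : Type} [AddCommGroup M] [Module ℂ M] (g : FaMon m n → M) (x : FaMon m n) :
    mkOp g (amono x) = g x := by
  simp [mkOp, amono]

theorem cntB_update_self (b : Fin n → Bool) (i : Fin n) (v : Bool) :
    cntB (Function.update b i v) i = cntB b i := by
  refine congrArg Finset.card (Finset.filter_congr fun k _ => and_congr_right fun hk => ?_)
  rw [Function.update_of_ne hk.ne]

theorem aDiv_amono {c : Ind m n} {x x' : FaMon m n} (h : IsRaise c x x') :
    aDiv c (amono x) = koszulSign c x • amono x' := by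
  rcases c with i | i
  · rw [isRaise_inl.1 h, koszulSign_inl, one_smul]
    exact mkOp_amono _ x
  · obtain ⟨hi, rfl⟩ := isRaise_inr.1 h
    rw [koszulSign_inr]
    exact (mkOp_amono _ x).trans (by simp [hi])

theorem aDiv_amono_eq_zero {c : Ind m n} {x : FaMon m n} (h : pI c * expo x c ≠ 0) :
    aDiv c (amono x) = 0 := by
  rcases c with i | i
  · simp [pI] at h
  · refine (mkOp_amono _ x).trans (if_pos ?_)
    simpa [pI, expo] using h

theorem aParB_amono (a : ℂ) {c : Ind m n} {x x' : FaMon m n} (h : IsRaise c x x') :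
    aParB a (emb c) (amono x') = (expo x' c * koszulSign c x) • amono x := by
  rcases c with i | i
  · obtain rfl := isRaise_inl.1 h
    rw [koszulSign_inl]
    exact (mkOp_amono _ _).trans (by simp [expo])
  · obtain ⟨hi, rfl⟩ := isRaise_inr.1 h
    rw [koszulSign_inr]
    exact (mkOp_amono _ _).trans (by simp [expo, cntB_update_self, ← hi])

theorem aParB_amono_eq_zero (a : ℂ) {c : Ind m n} {x : FaMon m n} (h : expo x c = 0) :
    aParB a (emb c) (amono x) = 0 := by
  rcases c with i | i
  · have hi : x.1 i = 0 := h
    exact (mkOp_amono _ x).trans (by simp [hi])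
  · have hi : x.2 i = false := by simpa [expo] using h
    exact (mkOp_amono _ x).trans (by simp [hi])

theorem aPar0_amono (a : ℂ) (x : FaMon m n) : aPar0 a (amono x) = (a - degree x) • amono x := by
  refine (mkOp_amono _ x).trans (congrArg (· • amono x) ?_)
  rw [degree, Fintype.sum_sum_type, cntA_eq_sum, sub_sub, Nat.cast_add, Nat.cast_sum,
    Nat.cast_sum, Nat.cast_sum]
  rfl

theorem aDiv_aParB_amono (a : ℂ) (c : Ind m n) (x : FaMon m n) :
    aDiv c (aParB a (emb c) (amono x)) = (expo x c : ℂ) • amono x := by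
  by_cases hx : expo x c = 0
  · rw [aParB_amono_eq_zero a hx, hx, map_zero, Nat.cast_zero, zero_smul]
  · obtain ⟨x₀, h⟩ := exists_isRaise_to hx
    rw [aParB_amono a h, map_smul, aDiv_amono h, smul_smul, mul_assoc, koszulSign_mul_self, mul_one]

theorem aParB_aDiv_amono (a : ℂ) (c : Ind m n) (x : FaMon m n) :
    aParB a (emb c) (aDiv c (amono x)) =
      amono x + (-1 : ℂ) ^ pI c • aDiv c (aParB a (emb c) (amono x)) := by
  rw [aDiv_aParB_amono]
  by_cases hx : pI c * expo x c = 0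
  · obtain ⟨x', h⟩ := exists_isRaise_iff.2 hx
    rw [aDiv_amono h, map_smul, aParB_amono a h, smul_smul, mul_left_comm, koszulSign_mul_self,
      mul_one, h.expo_self]
    rcases Nat.mul_eq_zero.1 hx with hc | hc <;> simp [hc]
    module
  · rw [aDiv_amono_eq_zero hx, map_zero]
    rcases c with i | i
    · simp [pI] at hx
    · have hi : x.2 i = true := by simpa [pI, expo] using hx
      simp [pI, expo, hi]

theorem aDiv_aDiv_amono_eq_zero {c j : Ind m n} (hcj : c ≠ j) {x : FaMon m n}
    (hc : pI c * expo x c ≠ 0) : aDiv c (aDiv j (amono x)) = 0 := by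
  by_cases hj : pI j * expo x j = 0
  · obtain ⟨xj, h⟩ := exists_isRaise_iff.2 hj
    rw [aDiv_amono h, map_smul, aDiv_amono_eq_zero (h.expo_of_ne hcj ▸ hc), smul_zero]
  · rw [aDiv_amono_eq_zero hj, map_zero]

theorem aDiv_aDiv_amono {c j : Ind m n} (hcj : c ≠ j) (x : FaMon m n) :
    aDiv c (aDiv j (amono x)) = (-1 : ℂ) ^ (pI c * pI j) • aDiv j (aDiv c (amono x)) := by
  by_cases hc : pI c * expo x c = 0; swap
  · rw [aDiv_aDiv_amono_eq_zero hcj hc, aDiv_amono_eq_zero hc, map_zero, smul_zero]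
  by_cases hj : pI j * expo x j = 0; swap
  · rw [aDiv_aDiv_amono_eq_zero hcj.symm hj, aDiv_amono_eq_zero hj, map_zero, smul_zero]
  obtain ⟨xc, hxc⟩ := exists_isRaise_iff.2 hc
  obtain ⟨xj, hxj⟩ := exists_isRaise_iff.2 hj
  obtain ⟨y, hxcy⟩ := exists_isRaise_iff.2 ((hxc.expo_of_ne hcj.symm).symm ▸ hj)
  have hxjy : IsRaise c xj y := by
    unfold IsRaise at *
    rw [hxcy, hxc, hxj, add_right_comm]
  rw [aDiv_amono hxc, aDiv_amono hxj, map_smul, map_smul, aDiv_amono hxcy, aDiv_amono hxjy,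
    smul_smul, smul_smul, smul_smul, hxj.koszulSign_eq, hxc.koszulSign_eq]
  congr 1
  rcases (idxRank_injective.ne hcj).lt_or_gt with h | h
  · have hsq : ((-1 : ℂ) ^ (pI c * pI j)) * (-1) ^ (pI j * pI c) = 1 := by
      rw [mul_comm (pI j), ← mul_pow, neg_mul_neg, one_mul, one_pow]
    rw [if_pos h, if_neg h.not_gt]
    linear_combination (-koszulSign c x * koszulSign j x) * hsq
  · rw [if_pos h, if_neg h.not_gt]
    ring

theorem aDiv_aDiv {c j : Ind m n} (hcj : c ≠ j) (y : FaSp m n) :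
    aDiv c (aDiv j y) = (-1 : ℂ) ^ (pI c * pI j) • aDiv j (aDiv c y) := by
  suffices h : aDiv c ∘ₗ aDiv j = (-1 : ℂ) ^ (pI c * pI j) • (aDiv j ∘ₗ aDiv c) from
    LinearMap.congr_fun h y
  refine Finsupp.lhom_ext' fun x => LinearMap.ext_ring ?_
  exact aDiv_aDiv_amono hcj x

theorem exists_amono_eq_smul_aDiv {y : FaMon m n} {d : ℕ} (hy : degree y = d + 1) :
    ∃ (c : Ind m n) (x : FaMon m n) (s : ℂ), degree x = d ∧ amono y = s • aDiv c (amono x) := by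
  obtain ⟨c, -, hc⟩ : ∃ c ∈ Finset.univ, expo y c ≠ 0 :=
    Finset.exists_ne_zero_of_sum_ne_zero (hy.trans_ne d.succ_ne_zero)
  obtain ⟨x, h⟩ := exists_isRaise_to hc
  refine ⟨c, x, koszulSign c x, Nat.succ_injective (h.degree_eq.symm.trans hy), ?_⟩
  rw [aDiv_amono h, smul_smul, koszulSign_mul_self, one_smul]

theorem aDivB_emb (c : Ind m n) : aDivB (emb c) = aDiv c := by
  cases c <;> rfl

theorem aTD_z0_right (a : ℂ) (c : Ind m n) : aTD a (emb c) z0 = aDiv c * aPar0 a := by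
  rw [aTD, aDivB_emb]
  rfl

theorem aTD_z0_left (a : ℂ) (i : Ind (m + 1) n) : aTD a z0 i = aParB a i :=
  one_mul _

theorem aTD_z0_z0_amono (a : ℂ) (x : FaMon m n) :
    aTD a z0 z0 (amono x) = (a - degree x) • amono x := by
  rw [aTD_z0_left]
  exact aPar0_amono a x

theorem aTD_emb_emb (a : ℂ) (c d : Ind m n) : aTD a (emb c) (emb d) = aDiv c * aParB a (emb d) := by
  rw [aTD, aDivB_emb]

theorem exists_aTD_amono (a : ℂ) (c d : Ind m n) (x : FaMon m n) :
    ∃ (s : ℂ) (x' : FaMon m n), degree x' = degree x ∧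
      aTD a (emb c) (emb d) (amono x) = s • amono x' := by
  rw [aTD_emb_emb, Module.End.mul_apply]
  by_cases hx : expo x d = 0
  · exact ⟨0, x, rfl, by rw [aParB_amono_eq_zero a hx, map_zero, zero_smul]⟩
  obtain ⟨x₀, h⟩ := exists_isRaise_to hx
  rw [aParB_amono a h, map_smul]
  by_cases hx₀ : pI c * expo x₀ c = 0
  · obtain ⟨x', h'⟩ := exists_isRaise_iff.2 hx₀
    exact ⟨_, x', h'.degree_eq.trans h.degree_eq.symm, by rw [aDiv_amono h', smul_smul]⟩
  · exact ⟨0, x, rfl, by rw [aDiv_amono_eq_zero hx₀, smul_zero, zero_smul]⟩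

theorem aTD_aDiv_amono (a : ℂ) {c j : Ind m n} (hcj : c ≠ j) (x : FaMon m n) :
    aTD a (emb c) (emb j) (aDiv j (amono x)) = aDiv c (amono x) +
      ((-1 : ℂ) ^ pI j * (-1) ^ (pI c * pI j)) •
        aDiv j (aTD a (emb c) (emb j) (amono x)) := by
  rw [aTD_emb_emb, Module.End.mul_apply, aParB_aDiv_amono, map_add, map_smul, aDiv_aDiv hcj,
    smul_smul, Module.End.mul_apply]

end Operators

section HighestWeight

variable {ι : Type} [DecidableEq ι] {p : ι → ℕ} {L M : Type*} [AddCommGroup L] [Module ℂ L]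
  [AddCommGroup M] [Module ℂ M]

/-- `v` generates the representation `ρ`. -/
def IsCyclicVector (ρ : UEA ι p →ₐ[ℂ] Module.End ℂ L) (v : L) : Prop :=
  ∀ N : Submodule ℂ L, (∀ u, ∀ x ∈ N, ρ u x ∈ N) → v ∈ N → N = ⊤

theorem map_rep_of_map_rep_gen {ρ : UEA ι p →ₐ[ℂ] Module.End ℂ L}
    {ρ' : UEA ι p →ₐ[ℂ] Module.End ℂ M} (f : L →ₗ[ℂ] M)
    (h : ∀ i j x, f (ρ (gen p i j) x) = ρ' (gen p i j) (f x)) (u : UEA ι p) (x : L) :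
    f (ρ u x) = ρ' u (f x) := by
  obtain ⟨u, rfl⟩ := RingQuot.mkAlgHom_surjective ℂ (glRel ι p) u
  induction u using FreeAlgebra.induction generalizing x with
  | grade0 c => simp
  | grade1 q => exact h q.1 q.2 x
  | mul u w hu hw => simp [hu, hw]
  | add u w hu hw => simp [hu, hw]

namespace IsCyclicVector

variable {ρ : UEA ι p →ₐ[ℂ] Module.End ℂ L} {ρ' : UEA ι p →ₐ[ℂ] Module.End ℂ M} {v : L}

theorem map_mem (hv : IsCyclicVector ρ v) {f : L →ₗ[ℂ] M} (hf : ∀ u x, f (ρ u x) = ρ' u (f x))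
    {N : Submodule ℂ M} (hN : ∀ i j, ∀ x ∈ N, ρ' (gen p i j) x ∈ N) (hfv : f v ∈ N) (x : L) :
    f x ∈ N := by
  have htop : N.comap f = ⊤ := hv _ (fun u x hx => by
    rw [Submodule.mem_comap, hf]
    exact stable_of_gen ρ' hN u hx) hfv
  exact Submodule.eq_top_iff'.1 htop x

theorem hom_ext (hv : IsCyclicVector ρ v) {f g : L →ₗ[ℂ] M} (hf : ∀ u x, f (ρ u x) = ρ' u (f x))
    (hg : ∀ u x, g (ρ u x) = ρ' u (g x)) (hfg : f v = g v) : f = g := by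
  refine LinearMap.eqLocus_eq_top.1 (hv _ (fun u x hx => ?_) hfg)
  rw [LinearMap.mem_eqLocus] at hx ⊢
  rw [hf, hg, hx]

end IsCyclicVector

variable {m n : ℕ}

/-- `v` is a highest weight vector of weight `lam`, possibly zero. -/
structure IsHighestWeightVector (ρ : UEA (Ind m n) pI →ₐ[ℂ] Module.End ℂ L) (lam : Ind m n → ℂ)
    (v : L) : Prop where
  raise : ∀ i j, iltI i j → ρ (gen pI i j) v = 0
  weight : ∀ i, ρ (gen pI i i) v = lam i • v

theorem IsHighestWeightVector.cartan_apply {ρ : UEA (Ind m n) pI →ₐ[ℂ] Module.End ℂ L}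
    {lam : Ind m n → ℂ} {v : L} (hv : IsHighestWeightVector ρ lam v) (h : Ind m n → ℂ) :
    ρ (cartan pI h) v = (∑ i, h i * lam i) • v := by
  simp only [cartan, map_sum, map_smul, LinearMap.sum_apply, LinearMap.smul_apply, hv.weight,
    smul_smul, ← Finset.sum_smul]

/-- The condition that `(λ̃ + ρ, δ_0 - δ_c)` is not a positive integer for even `c ∈ I`, and not a
nonnegative integer for odd `c ∈ I`; the shift `r` in `λ̃` cancels. -/
def Nonresonant (a : ℂ) (lam : Ind m n → ℂ) : Prop :=
  ∀ (c : Ind m n) (d : ℕ),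
    a - d + ∑ j : Ind m n with idxRank j < idxRank c, (-1 : ℂ) ^ pI j ≠ (-1) ^ pI c * lam c

theorem nonresonant_of_forall_not_int {a : ℂ} {lam : Ind m n → ℂ}
    (h : ∀ i, ¬∃ z : ℤ, lam i - (-1 : ℂ) ^ pI i * a = z) : Nonresonant a lam := by
  intro c d hcd
  refine h c ⟨(-1) ^ pI c * (∑ j : Ind m n with idxRank j < idxRank c, (-1 : ℤ) ^ pI j - d), ?_⟩
  have hsq : (-1 : ℂ) ^ pI c * (-1) ^ pI c = 1 := by rw [← mul_pow]; simp
  push_cast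
  linear_combination -(-1 : ℂ) ^ pI c * hcd - lam c * hsq

end HighestWeight

section Generation

theorem span_image2_tmul_eq_top {R M N : Type*} [CommRing R] [AddCommGroup M] [AddCommGroup N]
    [Module R M] [Module R N] {s : Set M} {t : Set N} (hs : Submodule.span R s = ⊤)
    (ht : Submodule.span R t = ⊤) :
    Submodule.span R (Set.image2 (fun x y => x ⊗ₜ[R] y) s t) = ⊤ := by
  rw [← TensorProduct.map₂_mk_top_top_eq_top, ← hs, ← ht, Submodule.map₂_span_span]
  rfl

variable {m n : ℕ}

theorem span_range_amono : Submodule.span ℂ (Set.range (amono (m := m) (n := n))) = ⊤ := by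
  have h := (Finsupp.basisSingleOne (R := ℂ) (ι := FaMon m n)).span_eq
  rwa [Finsupp.coe_basisSingleOne] at h

variable {a r : ℂ} {lam : Ind m n → ℂ} {L : Type} [AddCommGroup L] [Module ℂ L]
  {ρ : UEA (Ind m n) pI →ₐ[ℂ] Module.End ℂ L}
  {Θ : UEA (Ind (m + 1) n) pI →ₐ[ℂ] Module.End ℂ (FaSp m n ⊗[ℂ] L)}

theorem IsTensorRep.apply_aDiv_tmul (hΘ : IsTensorRep a r ρ Θ) {c j : Ind m n} (hcj : c ≠ j)
    (x : FaMon m n) (w : L) :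
    Θ (gen pI (emb c) (emb j)) (aDiv j (amono x) ⊗ₜ[ℂ] w) =
      aTD a (emb c) (emb j) (aDiv j (amono x)) ⊗ₜ[ℂ] w +
      (-1 : ℂ) ^ ((pI c + pI j) * (parM x + pI j)) •
        (aDiv j (amono x) ⊗ₜ[ℂ] ρ (gen pI c j) w) := by
  by_cases hj : pI j * expo x j = 0
  · obtain ⟨x', h⟩ := exists_isRaise_iff.2 hj
    rw [aDiv_amono h, ← TensorProduct.smul_tmul', map_smul, hΘ.1, if_neg hcj, add_zero, smul_add,
      map_smul, h.parM_eq, ← TensorProduct.smul_tmul', ← TensorProduct.smul_tmul', smul_comm]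
  · simp only [aDiv_amono_eq_zero hj, TensorProduct.zero_tmul, map_zero, smul_zero, add_zero]

variable {N : Submodule ℂ (FaSp m n ⊗[ℂ] L)}

theorem amono_tmul_mem_of_cyclic (hΘ : IsTensorRep a r ρ Θ) (hN : ∀ u, ∀ x ∈ N, Θ u x ∈ N) {v : L}
    (hv : IsCyclicVector ρ v) {d : ℕ} (h : ∀ x, degree x = d → amono x ⊗ₜ[ℂ] v ∈ N) (w : L)
    {x : FaMon m n} (hx : degree x = d) : amono x ⊗ₜ[ℂ] w ∈ N := by
  let W : Submodule ℂ L :=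
    ⨅ (x : FaMon m n) (_ : degree x = d), N.comap (TensorProduct.mk ℂ _ L (amono x))
  have hW : ∀ w, w ∈ W ↔ ∀ x, degree x = d → amono x ⊗ₜ[ℂ] w ∈ N := fun w => by
    simp [W, Submodule.mem_iInf]
  suffices htop : W = ⊤ from (hW w).1 (htop ▸ Submodule.mem_top) x hx
  refine hv W (fun u w hw => stable_of_gen ρ (fun c j w hw => ?_) u hw) ((hW v).2 h)
  refine (hW _).2 fun x hx => ?_
  have hmem := hN (gen pI (emb c) (emb j)) _ ((hW w).1 hw x hx)
  obtain ⟨s, x', hx', hs⟩ := exists_aTD_amono a c j x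
  have htd : aTD a (emb c) (emb j) (amono x) ⊗ₜ[ℂ] w ∈ N := by
    rw [hs, ← TensorProduct.smul_tmul']
    exact N.smul_mem s ((hW w).1 hw x' (hx'.trans hx))
  have hr : (if c = j then ((-1 : ℂ) ^ (pI c * pI j) * r) • (amono x ⊗ₜ[ℂ] w) else 0) ∈ N := by
    split_ifs
    exacts [N.smul_mem _ ((hW w).1 hw x hx), N.zero_mem]
  rw [hΘ.1, Submodule.add_mem_iff_left (M := FaSp m n ⊗[ℂ] L) N hr,
    Submodule.add_mem_iff_right (M := FaSp m n ⊗[ℂ] L) N htd] at hmem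
  exact (N.smul_mem_iff (pow_ne_zero _ (neg_ne_zero.2 one_ne_zero))).1 hmem

/-- Apply `e_{cj}` to `t_j x ⊗ v`, which lies in `N`. -/
theorem sign_smul_add_aDiv_tmul_mem (hΘ : IsTensorRep a r ρ Θ) (hN : ∀ u, ∀ x ∈ N, Θ u x ∈ N)
    {v : L} {d : ℕ} {c j : Ind m n} (hcj : c ≠ j)
    (hj : ∀ x, degree x = d → aDiv j (amono x) ⊗ₜ[ℂ] v ∈ N) {x : FaMon m n} (hx : degree x = d) :
    ((-1 : ℂ) ^ (pI c * pI j) * (-1) ^ ((pI c + pI j) * parM x)) •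
        (aDiv j (amono x) ⊗ₜ[ℂ] ρ (gen pI c j) v) +
      (-1 : ℂ) ^ pI j • (aDiv c (amono x) ⊗ₜ[ℂ] v) ∈ N := by
  have hmem := hN (gen pI (emb c) (emb j)) _ (hj x hx)
  obtain ⟨s, x', hx', hs⟩ := exists_aTD_amono a c j x
  have htd : ((-1 : ℂ) ^ pI j * (-1) ^ (pI c * pI j)) •
      (aDiv j (aTD a (emb c) (emb j) (amono x)) ⊗ₜ[ℂ] v) ∈ N := by
    rw [hs, map_smul, ← TensorProduct.smul_tmul']
    exact N.smul_mem _ (N.smul_mem s (hj x' (hx'.trans hx)))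
  rw [hΘ.apply_aDiv_tmul hcj, aTD_aDiv_amono a hcj, TensorProduct.add_tmul,
    ← TensorProduct.smul_tmul', add_right_comm,
    Submodule.add_mem_iff_left (M := FaSp m n ⊗[ℂ] L) N htd] at hmem
  have hsign : (-1 : ℂ) ^ pI j * (-1) ^ ((pI c + pI j) * (parM x + pI j)) =
      (-1) ^ (pI c * pI j) * (-1) ^ ((pI c + pI j) * parM x) := by
    rw [← pow_add, ← pow_add]
    exact neg_one_pow_congr (by simp only [Nat.even_add, Nat.even_mul]; tauto)
  have hsmul := N.smul_mem ((-1 : ℂ) ^ pI j) hmem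
  rwa [smul_add, smul_smul, hsign, add_comm] at hsmul

/-- The coefficient of `t_c x ⊗ v` in the `j`-th summand of `e_{c0} (x ⊗ v)`, modulo a submodule
containing the vectors `t_j x ⊗ v`, `j < c`. -/
def summandCoeff (lam : Ind m n → ℂ) (c j : Ind m n) : ℂ :=
  if idxRank j < idxRank c then -(-1) ^ pI j else if j = c then (-1) ^ pI c * lam c else 0

theorem sum_summandCoeff (lam : Ind m n → ℂ) (c : Ind m n) :
    ∑ j, summandCoeff lam c j =
      (-1) ^ pI c * lam c - ∑ j : Ind m n with idxRank j < idxRank c, (-1 : ℂ) ^ pI j := by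
  have hsplit : ∀ j, summandCoeff lam c j = (if j = c then (-1) ^ pI c * lam c else 0) -
      if idxRank j < idxRank c then (-1 : ℂ) ^ pI j else 0 := fun j => by
    unfold summandCoeff
    by_cases h : j = c
    · subst h
      simp
    · split_ifs <;> simp
  rw [Finset.sum_congr rfl fun j _ => hsplit j, Finset.sum_sub_distrib, Finset.sum_ite_eq',
    if_pos (Finset.mem_univ c), Finset.sum_filter]

theorem summand_sub_mem (hΘ : IsTensorRep a r ρ Θ) (hN : ∀ u, ∀ x ∈ N, Θ u x ∈ N) {v : L}
    (hv : IsHighestWeightVector ρ lam v) {d : ℕ} {c : Ind m n}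
    (hlt : ∀ j, idxRank j < idxRank c → ∀ x, degree x = d → aDiv j (amono x) ⊗ₜ[ℂ] v ∈ N)
    {x : FaMon m n} (hx : degree x = d) (j : Ind m n) :
    ((-1 : ℂ) ^ (pI c * pI j) * (-1) ^ ((pI c + pI j) * parM x)) •
        (aDiv j (amono x) ⊗ₜ[ℂ] ρ (gen pI c j) v) -
      summandCoeff lam c j • (aDiv c (amono x) ⊗ₜ[ℂ] v) ∈ N := by
  unfold summandCoeff
  split_ifs with hjc hjc'
  · have hcj : c ≠ j := fun h => hjc.ne (h ▸ rfl)
    rw [neg_smul (M := FaSp m n ⊗[ℂ] L), sub_neg_eq_add]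
    exact sign_smul_add_aDiv_tmul_mem hΘ hN hcj (hlt j hjc) hx
  · subst hjc'
    rw [hv.weight, TensorProduct.tmul_smul, smul_smul, neg_one_pow_add_self_mul, mul_one,
      neg_one_pow_pI_mul_self, sub_self]
    exact N.zero_mem
  · have hcj : iltI c j := iltI_iff_idxRank_lt.2 <|
      lt_of_le_of_ne (not_lt.1 hjc) fun h => hjc' (idxRank_injective h).symm
    simp [hv.raise c j hcj]

theorem aDiv_tmul_mem (hΘ : IsTensorRep a r ρ Θ) (hN : ∀ u, ∀ x ∈ N, Θ u x ∈ N) {v : L}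
    (hv : IsHighestWeightVector ρ lam v) (hlam : Nonresonant a lam) {d : ℕ}
    (hd : ∀ x, degree x = d → amono x ⊗ₜ[ℂ] v ∈ N) (c : Ind m n) :
    ∀ x, degree x = d → aDiv c (amono x) ⊗ₜ[ℂ] v ∈ N := by
  induction c using (measure idxRank).wf.induction with
  | _ c ih =>
  intro x hx
  have hmem := hN (gen pI (emb c) z0) _ (hd x hx)
  have hsum := N.sum_mem fun j (_ : j ∈ Finset.univ) => summand_sub_mem hΘ hN hv ih hx j
  rw [Finset.sum_sub_distrib (G := FaSp m n ⊗[ℂ] L), ← Finset.sum_smul, sum_summandCoeff] at hsum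
  rw [hΘ.2.1, aTD_z0_right, Module.End.mul_apply, aPar0_amono, map_smul,
    ← TensorProduct.smul_tmul', hx] at hmem
  have hadd := N.add_mem hmem hsum
  rw [sub_add_sub_cancel (G := FaSp m n ⊗[ℂ] L), ← sub_smul (M := FaSp m n ⊗[ℂ] L)] at hadd
  refine (N.smul_mem_iff fun h => hlam c d ?_).1 hadd
  linear_combination h

theorem eq_top_of_hwMon_tmul_mem (hΘ : IsTensorRep a r ρ Θ) {v : L}
    (hv : IsHighestWeightVector ρ lam v) (hcyc : IsCyclicVector ρ v) (hlam : Nonresonant a lam)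
    (hN : ∀ u, ∀ x ∈ N, Θ u x ∈ N) (h : amono (hwMon m n) ⊗ₜ[ℂ] v ∈ N) : N = ⊤ := by
  have hlayer : ∀ d (x : FaMon m n), degree x = d → amono x ⊗ₜ[ℂ] v ∈ N := by
    intro d
    induction d with
    | zero => exact fun x hx => eq_hwMon_of_degree_eq_zero hx ▸ h
    | succ d ih =>
      intro y hy
      obtain ⟨c, x, s, hx, hs⟩ := exists_amono_eq_smul_aDiv hy
      rw [hs, ← TensorProduct.smul_tmul']
      exact N.smul_mem s (aDiv_tmul_mem hΘ hN hv hlam ih c x hx)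
  rw [eq_top_iff, ← span_image2_tmul_eq_top span_range_amono Submodule.span_univ, Submodule.span_le]
  rintro _ ⟨_, ⟨x, rfl⟩, w, -, rfl⟩
  exact amono_tmul_mem_of_cyclic hΘ hN hcyc (hlayer (degree x)) w rfl

end Generation

section LowerMonomials

variable {m n : ℕ}

/-- The generator `e_{c0}` of `U(gl(m+1|n))`. -/
def lowerGen (c : Ind m n) : UEA (Ind (m + 1) n) pI := gen pI (emb c) z0

theorem lowerGen_mul_lowerGen (c d : Ind m n) :
    lowerGen c * lowerGen d = (-1 : ℂ) ^ (pI c * pI d) • (lowerGen d * lowerGen c) := by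
  rw [lowerGen, lowerGen, satisfiesGlRel_gen pI, if_neg (emb_ne_z0 d).symm,
    if_neg (emb_ne_z0 c).symm, smul_zero, sub_zero, add_zero, pI_emb, pI_emb, pI_z0, add_zero,
    add_zero]

theorem lowerGen_sq_eq_zero {c : Ind m n} (hc : pI c ≠ 0) : lowerGen c ^ 2 = 0 := by
  rcases c with c | c
  · exact absurd rfl hc
  · have h := lowerGen_mul_lowerGen (m := m) (Sum.inr c) (Sum.inr c)
    rw [show pI (Sum.inr c : Ind m n) = 1 from rfl, one_mul, pow_one, ← pow_two] at h
    have h2 : (1 - (-1) : ℂ) • lowerGen (Sum.inr c : Ind m n) ^ 2 = 0 :=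
      (sub_smul 1 (-1) (lowerGen (Sum.inr c) ^ 2)).trans (by rw [one_smul, ← h, sub_self])
    exact (smul_eq_zero.1 h2).resolve_left (by norm_num)

/-- The ordered monomial in the `e_{c0}`, `c ∈ I`, with the exponents of a monomial of `F_a`. -/
def lowerMonomial (x : FaMon m n) : UEA (Ind (m + 1) n) pI :=
  (Finset.univ.toList.map fun c => lowerGen c ^ expo x c).prod

theorem lowerMonomial_hwMon : lowerMonomial (hwMon m n) = 1 := by
  simp [lowerMonomial, expo_hwMon]

theorem exists_lowerGen_mul_lowerMonomial (c : Ind m n) (x : FaMon m n) :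
    ∃ (s : ℂ) (x' : FaMon m n), lowerGen c * lowerMonomial x = s • lowerMonomial x' := by
  obtain ⟨s, hs⟩ := exists_mul_list_prod_pow_eq_smul lowerGen_mul_lowerGen (expo x) c
    (Finset.nodup_toList Finset.univ) (Finset.mem_toList.2 (Finset.mem_univ c))
  by_cases hx : pI c * expo x c = 0
  · obtain ⟨x', h⟩ := exists_isRaise_iff.2 hx
    exact ⟨s, x', hs.trans (by rw [lowerMonomial, show expo x' = _ from h])⟩
  · obtain ⟨hc, hxc⟩ := mul_ne_zero_iff.1 hx
    have hpow : lowerGen c ^ (expo x + Pi.single c 1 : Ind m n → ℕ) c = 0 := by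
      rw [Pi.add_apply, Pi.single_eq_same]
      exact pow_eq_zero_of_le (Nat.succ_le_succ (Nat.one_le_iff_ne_zero.2 hxc))
        (lowerGen_sq_eq_zero hc)
    refine ⟨0, x, hs.trans ?_⟩
    rw [List.prod_eq_zero (List.mem_map.2 ⟨c, by simp, hpow⟩), smul_zero, zero_smul]

theorem hasAdWeight_lowerMonomial (h : Ind (m + 1) n → ℂ) (x : FaMon m n) :
    HasAdWeight (cartan pI h) (lowerMonomial x) (∑ c, expo x c * (h (emb c) - h z0)) := by
  rw [← Finset.sum_map_toList]
  exact .list_prod (fun c => (hasAdWeight_cartan_gen h (emb c) z0).pow (expo x c)) _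

end LowerMonomials

section ShiftedEmbedding

variable {m n : ℕ} {L M : Type*} [AddCommGroup L] [Module ℂ L] [AddCommGroup M] [Module ℂ M]

/-- The embedding of `U(gl(m|n))` in `U(gl(m+1|n))`, twisted by the supertrace character so that it
pulls `λ̃` back to `λ`. -/
def shiftedEmb (r : ℂ) : UEA (Ind m n) pI →ₐ[ℂ] UEA (Ind (m + 1) n) pI :=
  UEA.lift _ (((satisfiesGlRel_gen pI).comp emb_injective pI_emb).sub_supertrace r)

variable {a r : ℂ} {lam : Ind m n → ℂ}

theorem rep_shiftedEmb_gen (ρ' : UEA (Ind (m + 1) n) pI →ₐ[ℂ] Module.End ℂ M) (c d : Ind m n)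
    (x : M) :
    ρ' (shiftedEmb r (gen pI c d)) x =
      ρ' (gen pI (emb c) (emb d)) x - (if c = d then (-1 : ℂ) ^ pI c * r else 0) • x := by
  rw [shiftedEmb, UEA.lift_gen, map_sub, map_smul, map_one]
  rfl

theorem lamTilde_emb (a r : ℂ) (lam : Ind m n → ℂ) (c : Ind m n) :
    lamTilde a r lam (emb c) = lam c + (-1) ^ pI c * r := by
  rcases c with c | c
  · simp [lamTilde, emb, pI]
  · simp [lamTilde, emb, pI, sub_eq_add_neg]

theorem lamTilde_z0 (a r : ℂ) (lam : Ind m n → ℂ) : lamTilde a r lam z0 = a + r := rfl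

theorem IsHighestWeightVector.comp_shiftedEmb
    {ρ' : UEA (Ind (m + 1) n) pI →ₐ[ℂ] Module.End ℂ M} {v' : M}
    (hv' : IsHighestWeightVector ρ' (lamTilde a r lam) v') :
    IsHighestWeightVector (ρ'.comp (shiftedEmb r)) lam v' where
  raise i j hij := by
    rw [AlgHom.comp_apply, rep_shiftedEmb_gen, if_neg (iltI_ne hij), zero_smul, sub_zero,
      hv'.raise _ _ (iltI_emb_iff.2 hij)]
  weight i := by
    rw [AlgHom.comp_apply, rep_shiftedEmb_gen, if_pos rfl, hv'.weight, lamTilde_emb, ← sub_smul,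
      add_sub_cancel_right]

theorem aTD_amono_hwMon (a : ℂ) (i : Ind (m + 1) n) (d : Ind m n) :
    aTD a i (emb d) (amono (hwMon m n)) = 0 := by
  rw [aTD, Module.End.mul_apply, aParB_amono_eq_zero a (by rw [expo_hwMon, Pi.zero_apply]),
    map_zero]

end ShiftedEmbedding

section TensorRep

variable {m n : ℕ} {a r : ℂ} {lam : Ind m n → ℂ} {L : Type} [AddCommGroup L] [Module ℂ L]
  {ρ : UEA (Ind m n) pI →ₐ[ℂ] Module.End ℂ L}
  {Θ : UEA (Ind (m + 1) n) pI →ₐ[ℂ] Module.End ℂ (FaSp m n ⊗[ℂ] L)}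

namespace IsTensorRep

theorem apply_emb_emb_hwMon_tmul (hΘ : IsTensorRep a r ρ Θ) (c d : Ind m n) (w : L) :
    Θ (gen pI (emb c) (emb d)) (amono (hwMon m n) ⊗ₜ[ℂ] w) =
      amono (hwMon m n) ⊗ₜ[ℂ] ρ (gen pI c d) w +
      (if c = d then (-1 : ℂ) ^ pI c * r else 0) • (amono (hwMon m n) ⊗ₜ[ℂ] w) := by
  have hpar : parM (hwMon m n) = 0 := by simp [parM_eq_sum, expo_hwMon]
  rw [hΘ.1, aTD_amono_hwMon, TensorProduct.zero_tmul, zero_add, hpar, mul_zero, pow_zero, one_smul,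
    ite_smul, zero_smul]
  split_ifs with h
  · rw [← h, neg_one_pow_pI_mul_self]
  · rfl

theorem hwMon_tmul_rep (hΘ : IsTensorRep a r ρ Θ) (u : UEA (Ind m n) pI) (w : L) :
    amono (hwMon m n) ⊗ₜ[ℂ] ρ u w = Θ (shiftedEmb r u) (amono (hwMon m n) ⊗ₜ[ℂ] w) := by
  refine map_rep_of_map_rep_gen (M := FaSp m n ⊗[ℂ] L) (ρ' := Θ.comp (shiftedEmb r))
    (TensorProduct.mk ℂ (FaSp m n) L (amono (hwMon m n))) (fun c d w => ?_) u w
  exact ((rep_shiftedEmb_gen (M := FaSp m n ⊗[ℂ] L) Θ c d _).trans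
    (sub_eq_of_eq_add (hΘ.apply_emb_emb_hwMon_tmul c d w))).symm

theorem isHighestWeightVector_hwMon_tmul (hΘ : IsTensorRep a r ρ Θ) {v : L}
    (hv : IsHighestWeightVector ρ lam v) :
    IsHighestWeightVector Θ (lamTilde a r lam) (amono (hwMon m n) ⊗ₜ[ℂ] v) where
  raise i j hij := by
    obtain rfl | ⟨d, rfl⟩ := eq_z0_or_exists_eq_emb j
    · exact absurd hij (not_iltI_z0 i)
    obtain rfl | ⟨c, rfl⟩ := eq_z0_or_exists_eq_emb i
    · rw [hΘ.2.2.1, aTD_amono_hwMon, TensorProduct.zero_tmul]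
    · rw [iltI_emb_iff] at hij
      rw [hΘ.apply_emb_emb_hwMon_tmul, hv.raise c d hij, TensorProduct.tmul_zero,
        if_neg (iltI_ne hij), zero_smul, zero_add]
  weight i := by
    obtain rfl | ⟨c, rfl⟩ := eq_z0_or_exists_eq_emb i
    · rw [hΘ.2.2.2, aTD_z0_z0_amono, ← TensorProduct.smul_tmul', degree_hwMon, Nat.cast_zero,
        sub_zero, ← add_smul, lamTilde_z0]
    · rw [hΘ.apply_emb_emb_hwMon_tmul, hv.weight, if_pos rfl, TensorProduct.tmul_smul, ← add_smul,
        lamTilde_emb]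

theorem cartan_tmul (hΘ : IsTensorRep a r ρ Θ) (h : Ind (m + 1) n → ℂ) {μ : ℂ} {w : L}
    (hw : ρ (cartan pI fun c => h (emb c)) w = μ • w) (x : FaMon m n) :
    Θ (cartan pI h) (amono x ⊗ₜ[ℂ] w) =
      (h z0 * (a + r) + ∑ c, h (emb c) * ((-1) ^ pI c * r) + μ +
        ∑ c, expo x c * (h (emb c) - h z0)) • (amono x ⊗ₜ[ℂ] w) := by
  have hemb : ∀ c, Θ (h (emb c) • gen pI (emb c) (emb c)) (amono x ⊗ₜ[ℂ] w) =
      (h (emb c) * (expo x c + (-1) ^ pI c * r)) • (amono x ⊗ₜ[ℂ] w) +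
        amono x ⊗ₜ[ℂ] ρ (h (emb c) • gen pI c c) w := fun c => by
    rw [map_smul, LinearMap.smul_apply, hΘ.1, if_pos rfl, neg_one_pow_add_self_mul, one_smul,
      aTD_emb_emb, Module.End.mul_apply, aDiv_aParB_amono, map_smul, LinearMap.smul_apply,
      TensorProduct.tmul_smul, ← TensorProduct.smul_tmul', neg_one_pow_pI_mul_self]
    module
  have hz0 : Θ (h z0 • gen pI z0 z0) (amono x ⊗ₜ[ℂ] w) =
      (h z0 * (a - degree x + r)) • (amono x ⊗ₜ[ℂ] w) := by
    rw [map_smul, LinearMap.smul_apply, hΘ.2.2.2, aTD_z0_z0_amono, ← TensorProduct.smul_tmul',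
      ← add_smul, smul_smul]
  have hcartan : ∑ c, amono x ⊗ₜ[ℂ] ρ (h (emb c) • gen pI c c) w = μ • (amono x ⊗ₜ[ℂ] w) := by
    rw [← TensorProduct.tmul_sum, ← LinearMap.sum_apply, ← map_sum]
    exact (congrArg _ hw).trans (TensorProduct.tmul_smul _ _ _)
  rw [cartan, map_sum, LinearMap.sum_apply, sum_eq_z0_add_sum_emb, hz0,
    Finset.sum_congr rfl fun c _ => hemb c, Finset.sum_add_distrib, ← Finset.sum_smul, hcartan,
    ← add_smul, ← add_smul]
  congr 1
  simp only [degree, Nat.cast_sum, mul_add, mul_sub, Finset.sum_add_distrib,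
    Finset.sum_sub_distrib, ← Finset.sum_mul]
  simp only [mul_comm]
  ring

end IsTensorRep

end TensorRep

section PBWMap

variable {m n : ℕ} {a r : ℂ} {lam : Ind m n → ℂ} {L M : Type} [AddCommGroup L] [Module ℂ L]
  [AddCommGroup M] [Module ℂ M]

/-- The linear map `t_0^{a - ∑ k_c} ∏ t_c^{k_c} ⊗ w ↦ ∏ e_{c0}^{k_c} ψ(w)`, through which the
Poincaré–Birkhoff–Witt spanning set of a Verma module is parametrized by `F_a ⊗ M(λ)`. -/
def pbwMap (ρ' : UEA (Ind (m + 1) n) pI →ₐ[ℂ] Module.End ℂ M) (ψ : L →ₗ[ℂ] M) :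
    FaSp m n ⊗[ℂ] L →ₗ[ℂ] M :=
  TensorProduct.lift (mkOp fun x => ρ' (lowerMonomial x) ∘ₗ ψ)

theorem pbwMap_tmul (ρ' : UEA (Ind (m + 1) n) pI →ₐ[ℂ] Module.End ℂ M) (ψ : L →ₗ[ℂ] M)
    (x : FaMon m n) (w : L) :
    pbwMap ρ' ψ (amono x ⊗ₜ[ℂ] w) = ρ' (lowerMonomial x) (ψ w) := by
  rw [pbwMap, TensorProduct.lift.tmul, mkOp_amono]
  rfl

theorem pbwMap_hwMon_tmul (ρ' : UEA (Ind (m + 1) n) pI →ₐ[ℂ] Module.End ℂ M) (ψ : L →ₗ[ℂ] M)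
    (w : L) : pbwMap ρ' ψ (amono (hwMon m n) ⊗ₜ[ℂ] w) = ψ w := by
  rw [pbwMap_tmul, lowerMonomial_hwMon, map_one, Module.End.one_apply]

theorem lowerGen_mem_range_pbwMap (ρ' : UEA (Ind (m + 1) n) pI →ₐ[ℂ] Module.End ℂ M)
    (ψ : L →ₗ[ℂ] M) (c : Ind m n) {y : M} (hy : y ∈ LinearMap.range (pbwMap ρ' ψ)) :
    ρ' (lowerGen c) y ∈ LinearMap.range (pbwMap ρ' ψ) := by
  obtain ⟨y, rfl⟩ := hy
  induction y using TensorProduct.induction_on with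
  | zero => simp
  | add y z hy hz => rw [map_add, map_add]; exact add_mem hy hz
  | tmul f w =>
  induction f using Finsupp.induction_linear with
  | zero => simp
  | add f g hf hg => rw [TensorProduct.add_tmul, map_add, map_add]; exact add_mem hf hg
  | single x s =>
    obtain ⟨s', x', h⟩ := exists_lowerGen_mul_lowerMonomial c x
    have hsingle : (Finsupp.single x s : FaSp m n) = s • amono x := by simp [amono]
    rw [hsingle, ← TensorProduct.smul_tmul', map_smul, map_smul, pbwMap_tmul,
      ← Module.End.mul_apply, ← map_mul, h, map_smul, LinearMap.smul_apply, ← pbwMap_tmul]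
    exact Submodule.smul_mem _ _ (Submodule.smul_mem _ _ (LinearMap.mem_range_self _ _))

variable {ρ : UEA (Ind m n) pI →ₐ[ℂ] Module.End ℂ L}
  {ρ' : UEA (Ind (m + 1) n) pI →ₐ[ℂ] Module.End ℂ M} {ψ : L →ₗ[ℂ] M} {v : L}

theorem raise_z0_emb_map (hψ : ∀ u w, ψ (ρ u w) = ρ' (shiftedEmb r u) (ψ w))
    (hcyc : IsCyclicVector ρ v) (hv : IsHighestWeightVector ρ' (lamTilde a r lam) (ψ v))
    (b : Ind m n) (w : L) : ρ' (gen pI z0 (emb b)) (ψ w) = 0 := by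
  suffices h : ψ w ∈ ⨅ b : Ind m n, LinearMap.ker (ρ' (gen pI z0 (emb b))) from
    LinearMap.mem_ker.1 ((Submodule.mem_iInf _).1 h b)
  refine hcyc.map_mem (ρ' := ρ'.comp (shiftedEmb r)) hψ (fun c d x hx => ?_) ?_ w
  · simp only [Submodule.mem_iInf, LinearMap.mem_ker] at hx ⊢
    intro b
    rw [AlgHom.comp_apply, rep_shiftedEmb_gen, map_sub, map_smul, hx b, rep_gen_gen, hx b, hx d,
      map_zero, if_neg (emb_ne_z0 d)]
    simp
  · simpa only [Submodule.mem_iInf, LinearMap.mem_ker] using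
      fun b => hv.raise z0 (emb b) (iltI_z0_emb b)

theorem weight_z0_map (hψ : ∀ u w, ψ (ρ u w) = ρ' (shiftedEmb r u) (ψ w))
    (hcyc : IsCyclicVector ρ v) (hv : IsHighestWeightVector ρ' (lamTilde a r lam) (ψ v)) (w : L) :
    ρ' (gen pI z0 z0) (ψ w) = (a + r) • ψ w := by
  suffices h : ψ w ∈ Module.End.eigenspace (ρ' (gen pI z0 z0)) (a + r) from
    Module.End.mem_eigenspace_iff.1 h
  refine hcyc.map_mem (ρ' := ρ'.comp (shiftedEmb r)) hψ (fun c d x hx => ?_) ?_ w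
  · rw [Module.End.mem_eigenspace_iff] at hx ⊢
    rw [AlgHom.comp_apply, rep_shiftedEmb_gen, map_sub, map_smul, hx, rep_gen_gen, hx,
      if_neg (emb_ne_z0 c).symm, if_neg (emb_ne_z0 d), neg_one_pow_add_self_mul, one_smul,
      one_smul, sub_zero, add_zero, map_smul, smul_sub, smul_comm (a + r)]
  · exact Module.End.mem_eigenspace_iff.2 (hv.weight z0)

/-- The pairs `(c, 0)`, `c ∈ I`. -/
def zeroColumn (m n : ℕ) : Set (Ind (m + 1) n × Ind (m + 1) n) := Set.range fun c => (emb c, z0)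

theorem rep_gen_map_mem_wordSpan (hψ : ∀ u w, ψ (ρ u w) = ρ' (shiftedEmb r u) (ψ w))
    (hcyc : IsCyclicVector ρ v) (hv : IsHighestWeightVector ρ' (lamTilde a r lam) (ψ v))
    (i j : Ind (m + 1) n) (w : L) :
    ρ' (gen pI i j) (ψ w) ∈ wordSpan ρ' (zeroColumn m n) (Set.range ψ) := by
  have hmem : ∀ w, ψ w ∈ wordSpan ρ' (zeroColumn m n) (Set.range ψ) := fun w =>
    subset_wordSpan ρ' (Set.mem_range_self w)
  obtain rfl | ⟨c, rfl⟩ := eq_z0_or_exists_eq_emb i <;>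
    obtain rfl | ⟨d, rfl⟩ := eq_z0_or_exists_eq_emb j
  · rw [weight_z0_map hψ hcyc hv]
    exact Submodule.smul_mem _ _ (hmem w)
  · rw [raise_z0_emb_map hψ hcyc hv]
    exact Submodule.zero_mem _
  · exact rep_gen_mem_wordSpan ρ' (⟨(emb c, z0), c, rfl⟩ : zeroColumn m n) (hmem w)
  · have h := hψ (gen pI c d) w
    rw [rep_shiftedEmb_gen, eq_sub_iff_add_eq] at h
    exact h ▸ add_mem (hmem _) (Submodule.smul_mem _ _ (hmem w))

theorem pbwMap_surjective (hψ : ∀ u w, ψ (ρ u w) = ρ' (shiftedEmb r u) (ψ w))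
    (hcyc : IsCyclicVector ρ v) (hv : IsHighestWeightVector ρ' (lamTilde a r lam) (ψ v))
    (hcyc' : IsCyclicVector ρ' (ψ v)) : Function.Surjective (pbwMap ρ' ψ) := by
  have hspan : wordSpan ρ' (zeroColumn m n) (Set.range ψ) = ⊤ := by
    refine hcyc' _ (fun u x hx => rep_mem_wordSpan ρ' ?_ u hx)
      (subset_wordSpan ρ' (Set.mem_range_self v))
    rintro i j _ ⟨w, rfl⟩
    exact rep_gen_map_mem_wordSpan hψ hcyc hv i j w
  rw [← LinearMap.range_eq_top, eq_top_iff, ← hspan]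
  refine wordSpan_le ρ' ?_ ?_
  · rintro _ ⟨w, rfl⟩
    exact ⟨_, pbwMap_hwMon_tmul ρ' ψ w⟩
  · rintro ⟨_, c, rfl⟩ x hx
    exact lowerGen_mem_range_pbwMap ρ' ψ c hx

end PBWMap

section LoweringWords

variable {m n : ℕ}

/-- The pairs `(i, j)` for which `e_{ij}` is strictly lower triangular. -/
def loweringPairs (m n : ℕ) : Set (Ind m n × Ind m n) := {q | iltI q.2 q.1}

theorem wordSpan_loweringPairs_eq_top {L : Type*} [AddCommGroup L] [Module ℂ L]
    {ρ : UEA (Ind m n) pI →ₐ[ℂ] Module.End ℂ L} {lam : Ind m n → ℂ} {v : L}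
    (hv : IsHighestWeightVector ρ lam v) (hcyc : IsCyclicVector ρ v) :
    wordSpan ρ (loweringPairs m n) {v} = ⊤ := by
  have hmem : v ∈ wordSpan ρ (loweringPairs m n) {v} := subset_wordSpan ρ rfl
  refine hcyc _ (fun u x hx => rep_mem_wordSpan ρ ?_ u hx) hmem
  rintro i j _ rfl
  obtain h | rfl | h := iltI_trichotomy i j
  · rw [hv.raise i j h]
    exact Submodule.zero_mem _
  · rw [hv.weight]
    exact Submodule.smul_mem _ _ hmem
  · exact rep_gen_mem_wordSpan ρ ⟨(i, j), h⟩ hmem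

theorem IsHighestWeightVector.cartan_genWord {L : Type*} [AddCommGroup L] [Module ℂ L]
    {ρ : UEA (Ind m n) pI →ₐ[ℂ] Module.End ℂ L} {lam : Ind m n → ℂ} {v : L}
    (hv : IsHighestWeightVector ρ lam v) (h : Ind m n → ℂ) {S : Set (Ind m n × Ind m n)}
    (l : List S) :
    ρ (cartan pI h) (ρ (genWord pI l) v) =
      (∑ i, h i * lam i + (l.map fun s => h s.1.1 - h s.1.2).sum) • ρ (genWord pI l) v :=
  HasAdWeight.apply_eq_smul
    (.list_prod (fun s : S => hasAdWeight_cartan_gen h s.1.1 s.1.2) l) ρ (hv.cartan_apply h)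

/-- The number of simple roots by which the weight of `∏ e_{c0}^{k_c}` times a word in the
`e_{ij}` lies below zero. -/
def height (x : FaMon m n) (l : List (loweringPairs m n)) : ℕ :=
  ∑ c, expo x c * (idxRank c + 1) + (l.map fun s => idxRank s.1.1 - idxRank s.1.2).sum

theorem length_le_sum_idxRank_sub (l : List (loweringPairs m n)) :
    l.length ≤ (l.map fun s => idxRank s.1.1 - idxRank s.1.2).sum := by
  have hpos : ∀ k ∈ l.map fun s => idxRank s.1.1 - idxRank s.1.2, 1 ≤ k := List.forall_mem_map.2
    fun s _ => Nat.sub_pos_of_lt (iltI_iff_idxRank_lt.1 s.2)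
  simpa only [List.length_map] using List.length_le_sum_of_one_le _ hpos

theorem finite_setOf_height_eq (k : ℕ) :
    {q : FaMon m n × List (loweringPairs m n) | height q.1 q.2 = k}.Finite := by
  have hmon : {x : FaMon m n | expo x ≤ fun _ => k}.Finite :=
    (Set.finite_Iic _).preimage expo_injective.injOn
  refine (hmon.prod (List.finite_length_le (loweringPairs m n) k)).subset ?_
  rintro ⟨x, l⟩ (hq : height x l = k)
  refine ⟨fun c => ?_, (length_le_sum_idxRank_sub l).trans ?_⟩
  · have hc := Finset.single_le_sum (f := fun c => expo x c * (idxRank c + 1))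
      (fun c _ => Nat.zero_le _) (Finset.mem_univ c)
    exact (Nat.le_mul_of_pos_right _ (Nat.succ_pos _)).trans
      (hc.trans (hq ▸ Nat.le_add_right _ _))
  · exact hq ▸ Nat.le_add_left _ _

end LoweringWords

section Main

variable {m n : ℕ} {a r : ℂ} {lam : Ind m n → ℂ} {L M : Type} [AddCommGroup L] [Module ℂ L]
  [AddCommGroup M] [Module ℂ M] {ρ : UEA (Ind m n) pI →ₐ[ℂ] Module.End ℂ L}
  {Θ : UEA (Ind (m + 1) n) pI →ₐ[ℂ] Module.End ℂ (FaSp m n ⊗[ℂ] L)} {v : L}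

theorem IsTensorRep.cartan_lowerMonomial_hwMon_tmul (hΘ : IsTensorRep a r ρ Θ)
    (h : Ind (m + 1) n → ℂ) {μ : ℂ} {w : L}
    (hw : ρ (cartan pI fun c => h (emb c)) w = μ • w) (x : FaMon m n) :
    Θ (cartan pI h) (Θ (lowerMonomial x) (amono (hwMon m n) ⊗ₜ[ℂ] w)) =
      (h z0 * (a + r) + ∑ c, h (emb c) * ((-1) ^ pI c * r) + μ +
        ∑ c, expo x c * (h (emb c) - h z0)) •
          Θ (lowerMonomial x) (amono (hwMon m n) ⊗ₜ[ℂ] w) := by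
  have hbase := hΘ.cartan_tmul h hw (hwMon m n)
  simp only [expo_hwMon, Pi.zero_apply, Nat.cast_zero, zero_mul, Finset.sum_const_zero,
    add_zero] at hbase
  exact (hasAdWeight_lowerMonomial h x).apply_eq_smul (L := FaSp m n ⊗[ℂ] L) Θ hbase

theorem sum_list_map_eq_neg_sum_idxRank_sub (l : List (loweringPairs m n)) :
    (l.map fun s => -(idxRank (emb s.1.1) : ℂ) - -(idxRank (emb s.1.2) : ℂ)).sum =
      -((l.map fun s => idxRank s.1.1 - idxRank s.1.2).sum : ℕ) := by
  induction l with
  | nil => simp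
  | cons s l ih =>
    rw [List.map_cons, List.map_cons, List.sum_cons, List.sum_cons, ih, Nat.cast_add,
      Nat.cast_sub (iltI_iff_idxRank_lt.1 s.2).le, idxRank_emb, idxRank_emb]
    push_cast
    ring

theorem sum_add_sum_list_eq_neg_height (x : FaMon m n) (l : List (loweringPairs m n)) :
    ∑ c, (expo x c : ℂ) * (-(idxRank (emb c) : ℂ) - -(idxRank (z0 : Ind (m + 1) n) : ℂ)) +
      (l.map fun s => -(idxRank (emb s.1.1) : ℂ) - -(idxRank (emb s.1.2) : ℂ)).sum =
        -(height x l : ℂ) := by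
  have hmon : ∀ c, (expo x c : ℂ) *
      (-(idxRank (emb c) : ℂ) - -(idxRank (z0 : Ind (m + 1) n) : ℂ)) =
        -((expo x c * (idxRank c + 1) : ℕ) : ℂ) := fun c => by
    rw [idxRank_emb, idxRank_z0, Nat.cast_mul, Nat.cast_zero, neg_zero, sub_zero, mul_neg]
  rw [sum_list_map_eq_neg_sum_idxRank_sub, Finset.sum_congr rfl fun c _ => hmon c,
    Finset.sum_neg_distrib, height, Nat.cast_add, Nat.cast_sum, neg_add]

theorem span_range_amono_tmul_genWord (hv : IsHighestWeightVector ρ lam v)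
    (hcyc : IsCyclicVector ρ v) :
    Submodule.span ℂ (Set.range fun q : FaMon m n × List (loweringPairs m n) =>
      amono q.1 ⊗ₜ[ℂ] ρ (genWord pI q.2) v) = ⊤ := by
  rw [← span_image2_tmul_eq_top span_range_amono (wordSpan_loweringPairs_eq_top hv hcyc)]
  congr 1
  ext y
  simp [Set.mem_image2]

variable {ρ' : UEA (Ind (m + 1) n) pI →ₐ[ℂ] Module.End ℂ M} {ψ : L →ₗ[ℂ] M}
  {f : M →ₗ[ℂ] FaSp m n ⊗[ℂ] L}

theorem map_pbwMap_tmul (hΘ : IsTensorRep a r ρ Θ) (hcyc : IsCyclicVector ρ v)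
    (hψ : ∀ u w, ψ (ρ u w) = ρ' (shiftedEmb r u) (ψ w)) (hf : ∀ u y, f (ρ' u y) = Θ u (f y))
    (hfv : f (ψ v) = amono (hwMon m n) ⊗ₜ[ℂ] v) (x : FaMon m n) (w : L) :
    f (pbwMap ρ' ψ (amono x ⊗ₜ[ℂ] w)) =
      Θ (lowerMonomial x) (amono (hwMon m n) ⊗ₜ[ℂ] w) := by
  let ι : L →ₗ[ℂ] FaSp m n ⊗[ℂ] L := TensorProduct.mk ℂ (FaSp m n) L (amono (hwMon m n))
  have hext : f ∘ₗ ψ = ι :=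
    hcyc.hom_ext (M := FaSp m n ⊗[ℂ] L) (ρ' := Θ.comp (shiftedEmb r)) (g := ι)
      (fun u w => (congrArg f (hψ u w)).trans (hf _ _)) hΘ.hwMon_tmul_rep hfv
  rw [pbwMap_tmul, hf]
  exact congrArg _ (LinearMap.congr_fun hext w)

theorem surjective_of_map_eq_hwMon_tmul (hΘ : IsTensorRep a r ρ Θ)
    (hv : IsHighestWeightVector ρ lam v) (hcyc : IsCyclicVector ρ v) (hlam : Nonresonant a lam)
    (hf : ∀ u y, f (ρ' u y) = Θ u (f y)) {v' : M} (hfv : f v' = amono (hwMon m n) ⊗ₜ[ℂ] v) :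
    Function.Surjective f := by
  refine LinearMap.range_eq_top.1 (eq_top_of_hwMon_tmul_mem hΘ hv hcyc hlam ?_ ⟨v', hfv⟩)
  rintro u _ ⟨y, rfl⟩
  exact ⟨ρ' u y, hf u y⟩

/-- Both `amono x ⊗ w` and its image under `f ∘ pbwMap` have weight `C - height`, for the grading
element acting on `δ_i` by minus the position of `i`. -/
theorem injective_comp_pbwMap (hΘ : IsTensorRep a r ρ Θ)
    (hv : IsHighestWeightVector ρ lam v) (hcyc : IsCyclicVector ρ v)
    (hψ : ∀ u w, ψ (ρ u w) = ρ' (shiftedEmb r u) (ψ w)) (hf : ∀ u y, f (ρ' u y) = Θ u (f y))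
    (hfv : f (ψ v) = amono (hwMon m n) ⊗ₜ[ℂ] v)
    (hsurj : Function.Surjective (f ∘ₗ pbwMap ρ' ψ)) :
    Function.Injective (f ∘ₗ pbwMap ρ' ψ) := by
  let h : Ind (m + 1) n → ℂ := fun i => -(idxRank i : ℂ)
  let C : ℂ := h z0 * (a + r) + ∑ c : Ind m n, h (emb c) * ((-1) ^ pI c * r) +
    ∑ c, h (emb c) * lam c
  have hweight : ∀ q : FaMon m n × List (loweringPairs m n),
      h z0 * (a + r) + ∑ c : Ind m n, h (emb c) * ((-1) ^ pI c * r) +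
        (∑ c, h (emb c) * lam c + (q.2.map fun s => h (emb s.1.1) - h (emb s.1.2)).sum) +
        ∑ c, expo q.1 c * (h (emb c) - h z0) = C - height q.1 q.2 := fun q => by
    linear_combination sum_add_sum_list_eq_neg_height q.1 q.2
  have hword := fun l : List (loweringPairs m n) => hv.cartan_genWord (fun c => h (emb c)) l
  refine injective_of_surjective_of_weights (X := FaSp m n ⊗[ℂ] L) (T := Θ (cartan pI h))
    (χ := fun q : FaMon m n × List (loweringPairs m n) => C - height q.1 q.2)
    (span_range_amono_tmul_genWord hv hcyc) (fun q => ?_) (fun q => ?_) (fun μ => ?_) hsurj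
  · exact hweight q ▸ hΘ.cartan_tmul h (hword q.2) q.1
  · rw [LinearMap.comp_apply, map_pbwMap_tmul hΘ hcyc hψ hf hfv, ← hweight q]
    exact hΘ.cartan_lowerMonomial_hwMon_tmul h (hword q.2) q.1
  · have hinj : Function.Injective fun k : ℕ => C - k :=
      sub_right_injective.comp Nat.cast_injective
    exact Set.Finite.preimage' (f := fun q : FaMon m n × List (loweringPairs m n) =>
      height q.1 q.2) ((Set.finite_singleton μ).preimage hinj.injOn)
      fun k _ => finite_setOf_height_eq k

theorem VermaM.isHighestWeightVector (V : VermaM m n lam) : IsHighestWeightVector V.ρ lam V.v :=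
  ⟨V.hw, V.hwt⟩

end Main

theorem stmt9_general (m n : ℕ) (a r : ℂ) (lam : Ind m n → ℂ) (hlam : Nonresonant a lam)
    (V : VermaM m n lam) (V' : VermaM (m + 1) n (lamTilde a r lam))
    (Θ : UEA (Ind (m + 1) n) pI →ₐ[ℂ] Module.End ℂ (FaSp m n ⊗[ℂ] V.L))
    (hΘ : IsTensorRep a r V.ρ Θ) :
    ∃ g : (FaSp m n ⊗[ℂ] V.L) ≃ₗ[ℂ] V'.L,
      ∀ (u : UEA (Ind (m + 1) n) pI) (x : FaSp m n ⊗[ℂ] V.L),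
        g (Θ u x) = V'.ρ u (g x) := by
  have hv := V.isHighestWeightVector
  have hv' := V'.isHighestWeightVector
  have ht := hΘ.isHighestWeightVector_hwMon_tmul hv
  obtain ⟨ψ, hψv, hψ⟩ := V.univ V'.L (V'.ρ.comp (shiftedEmb r)) V'.v hv'.comp_shiftedEmb.raise
    hv'.comp_shiftedEmb.weight
  obtain ⟨f, hfv, hf⟩ := V'.univ _ Θ (amono (hwMon m n) ⊗ₜ[ℂ] V.v) ht.raise ht.weight
  rw [← hψv] at hfv hv'
  have hpbw : Function.Surjective (pbwMap V'.ρ ψ) :=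
    pbwMap_surjective hψ V.gens hv' (hψv ▸ V'.gens)
  have hsurj : Function.Surjective f :=
    surjective_of_map_eq_hwMon_tmul hΘ hv V.gens hlam hf hfv
  have hinj : Function.Injective f := by
    have hcomp := injective_comp_pbwMap hΘ hv V.gens hψ hf hfv (hsurj.comp hpbw)
    exact Function.Injective.of_comp_right hcomp hpbw
  let e := LinearEquiv.ofBijective f ⟨hinj, hsurj⟩
  exact ⟨e.symm, fun u x => by
    rw [LinearEquiv.symm_apply_eq]
    exact ((hf u _).trans (congrArg (Θ u) (e.apply_symm_apply x))).symm⟩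

/-- Corollary 4.5.  If `λ` is a typical antidominant `gl(m|n)`-weight with
`λ_i − (−1)^{|i|}a ∉ ℤ` for all `i ∈ I` (i.e. `λ ∈ AW_{m|n}(a)`), then `F_a ⊗ M(λ)` is
isomorphic, as a `gl(m+1|n)`-representation, to the Verma module `M(λ̃)`. -/
theorem stmt9 (m n : ℕ) (a r : ℂ) (lam : Ind m n → ℂ)
    (had : Antidom lam) (hty : Typical lam)
    (hint : ∀ i : Ind m n, ¬∃ z : ℤ, lam i - ((-1 : ℂ) ^ (pI i)) * a = (z : ℂ))
    (V : VermaM m n lam) (V' : VermaM (m+1) n (lamTilde a r lam))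
    (Θ : UEA (Ind (m+1) n) pI →ₐ[ℂ] Module.End ℂ (FaSp m n ⊗[ℂ] V.L))
    (hΘ : IsTensorRep a r V.ρ Θ) :
    ∃ g : (FaSp m n ⊗[ℂ] V.L) ≃ₗ[ℂ] V'.L,
      ∀ (u : UEA (Ind (m+1) n) pI) (x : FaSp m n ⊗[ℂ] V.L),
        g (Θ u x) = V'.ρ u (g x) := by
  exact stmt9_general m n a r lam (nonresonant_of_forall_not_int hint) V V' Θ hΘ
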